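/- For every N ≥ 1 and every n ∈ ℕ, the following are equivalent: (1) there exists an ℝ-linear map f : ℝⁿ → M(2N,ℝ) such that every f(v) is symmetric, satisfies f(v)ᵀ J_N + J_N f(v) = 0, and f(v)² = ‖v‖² I_{2N} for all v ∈ ℝⁿ; (2) there exists an ℝ-linear map f : ℝⁿ → M(2N,ℝ) with every f(v) symmetric satisfying f(v)ᵀ J_N + J_N f(v) = 0 and f(v) invertible for every nonzero v; (3) n ≤ ρ(N/2) + 2. (Entry 𝔤 = 𝔰𝔭(N,ℝ) of the Hurwitz–Radon value theorem, the 𝔭-part being the symmetric elements of 𝔰𝔭(N,ℝ).) -/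

import Mathlib

open Matrix

/-- Extended Hurwitz–Radon number: writing the 2-adic valuation of `t` as `4a + b`
with `a ∈ ℤ` and `b ∈ {0,1,2,3}`, `ρ(t) := 8a + 2^b`. -/
noncomputable def hrRho (t : ℚ) : ℤ :=
  8 * (padicValRat 2 t / 4) + 2 ^ (padicValRat 2 t % 4).toNat

/-- The `2N × 2N` real block matrix `J_N = [[0, −I_N],[I_N, 0]]`. -/
def Jreal (N : ℕ) : Matrix (Fin N ⊕ Fin N) (Fin N ⊕ Fin N) ℝ :=
  Matrix.fromBlocks 0 (-1) 1 0

/-!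
For the upper bound on `n`, let the matrices `F i = f (e i)` act, together with auxiliary Clifford
matrices `G i` anticommuting with them, on a Euclidean space `W` of dimension `2 ^ n * 2 * N`, and
consider the Dirac operator `∑ i, G i ∂ᵢ + F i xᵢ` on `W`-valued functions on `ℝⁿ`. Since
`∑ i, x i • F i` is invertible for `x ≠ 0`, it is a Fredholm operator of harmonic-oscillator type.
It stays so while the `F i` are rotated into a Clifford system `B i` through
`cos θ • F i + sin θ • B i`, hence the index of its restriction to even functions is the same at
both ends. At `θ = π / 2` the square of the operator is a harmonic oscillator up to terms of order
zero, and the index is the dimension `2 * N` of the space of values of its Gaussian solutions. At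
`θ = 0` a Clifford algebra with `n + 1` generators acts on everything in sight, so the index is
divisible by the dimension of its irreducible modules, which is the power of two that `ρ (N / 2)`
encodes.

In the Hermite basis the functions become expansions indexed by `ι → ℕ`. The operator is divided by
the square root of the degree to make it bounded, and restricted to even expansions of large degree,
where coercivity makes it injective with closed range, so that only the dimension of a cokernel has
to be followed along the homotopy.

Conversely, Clifford systems of matrices of the minimal sizes are built by block doubling and by
exchanging the signs of the squares of four generators.
-/

universe u

section AntiCommute

variable {R : Type*} [Ring R] {a b c : R}

/-- Two elements of a ring anticommute if exchanging the factors of their product changes its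
sign. -/
def AntiCommute (a b : R) : Prop := a * b = -(b * a)

theorem AntiCommute.symm (h : AntiCommute a b) : AntiCommute b a := by
  rw [AntiCommute, h, neg_neg]

theorem AntiCommute.mul_right (hb : AntiCommute a b) (hc : AntiCommute a c) :
    Commute a (b * c) := by
  rw [Commute, SemiconjBy, ← mul_assoc, hb, neg_mul, mul_assoc, hc, mul_neg, neg_neg, mul_assoc]

theorem AntiCommute.mul_right_of_commute (hb : AntiCommute a b) (hc : Commute a c) :
    AntiCommute a (b * c) := by
  rw [AntiCommute, ← mul_assoc, hb, neg_mul, mul_assoc, hc.eq, mul_assoc]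

theorem AntiCommute.mul_right_of_commute_left (hc : AntiCommute a c) (hb : Commute a b) :
    AntiCommute a (b * c) := by
  rw [AntiCommute, ← mul_assoc, hb.eq, mul_assoc, hc, mul_neg, mul_assoc]

theorem AntiCommute.mul_mul_mul_comm (h : AntiCommute a b) (x y : R) :
    x * b * (a * y) = -(x * a * (b * y)) := by
  rw [mul_assoc, ← mul_assoc b, h.symm, neg_mul, mul_neg, mul_assoc a, mul_assoc x]

theorem AntiCommute.mul_mul_self (h : AntiCommute a b) :
    a * b * (a * b) = -(a * a * (b * b)) :=
  h.mul_mul_mul_comm a b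

theorem AntiCommute.map {S F : Type*} [Ring S] [FunLike F R S] [RingHomClass F R S]
    (h : AntiCommute a b) (f : F) : AntiCommute (f a) (f b) := by
  rw [AntiCommute, ← map_mul, h, map_neg, map_mul]

end AntiCommute

section Clifford

variable {R : Type*} [Ring R] {ι ι' κ κ' : Type*}

/-- A family `e` of pairwise anticommuting ring elements with prescribed squares `s i`. -/
structure IsClifford (s : ι → ℤ) (e : ι → R) : Prop where
  mul_self : ∀ i, e i * e i = s i
  antiCommute : Pairwise fun i j => AntiCommute (e i) (e j)

/-- The signature with generators of square `1` indexed by `ι` and of square `-1` indexed by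
`κ`. -/
def signature (ι κ : Type*) : ι ⊕ κ → ℤ := Sum.elim (fun _ => 1) (fun _ => -1)

/-- The ring `R` contains a Clifford system with positive generators indexed by `ι` and negative
ones by `κ`. -/
def HasClifford (R : Type*) [Ring R] (ι κ : Type*) : Prop :=
  ∃ e : ι ⊕ κ → R, IsClifford (signature ι κ) e

/-- A Clifford system in a star ring whose generators are unitary: positive generators are
selfadjoint, negative ones skew-adjoint. -/
structure IsStarClifford [StarRing R] (s : ι → ℤ) (e : ι → R) : Prop extends IsClifford s e where
  star_eq : ∀ i, star (e i) = s i * e i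

/-- The unitary counterpart of `HasClifford`. -/
def HasStarClifford (R : Type*) [Ring R] [StarRing R] (ι κ : Type*) : Prop :=
  ∃ e : ι ⊕ κ → R, IsStarClifford (signature ι κ) e

theorem IsClifford.comp {s : ι → ℤ} {e : ι → R} (h : IsClifford s e) {g : κ → ι}
    (hg : Function.Injective g) : IsClifford (s ∘ g) (e ∘ g) :=
  ⟨fun i => h.mul_self (g i), fun _ _ hij => h.antiCommute (hg.ne hij)⟩

theorem IsClifford.map {S : Type*} [Ring S] {s : ι → ℤ} {e : ι → R} (h : IsClifford s e)
    (f : R →+* S) : IsClifford s (f ∘ e) where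
  mul_self i := by simp [← map_mul, h.mul_self]
  antiCommute _ _ hij := (h.antiCommute hij).map f

theorem IsStarClifford.comp [StarRing R] {s : ι → ℤ} {e : ι → R} (h : IsStarClifford s e)
    {g : κ → ι} (hg : Function.Injective g) : IsStarClifford (s ∘ g) (e ∘ g) :=
  ⟨h.toIsClifford.comp hg, fun i => h.star_eq (g i)⟩

theorem signature_comp_sumMap (f : ι' → ι) (g : κ' → κ) :
    signature ι κ ∘ Sum.map f g = signature ι' κ' := by
  ext (i | i) <;> rfl

theorem HasClifford.comp (h : HasClifford R ι κ) (f : ι' ↪ ι) (g : κ' ↪ κ) :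
    HasClifford R ι' κ' := by
  obtain ⟨e, he⟩ := h
  exact ⟨_, signature_comp_sumMap f g ▸ he.comp (f.injective.sumMap g.injective)⟩

theorem HasStarClifford.comp [StarRing R] (h : HasStarClifford R ι κ) (f : ι' ↪ ι) (g : κ' ↪ κ) :
    HasStarClifford R ι' κ' := by
  obtain ⟨e, he⟩ := h
  exact ⟨_, signature_comp_sumMap f g ▸ he.comp (f.injective.sumMap g.injective)⟩

section FlipFour

variable {s : ι → ℤ} {a : ℤ} {e : ι ⊕ Fin 4 → R}

/-- The product of the four distinguished generators of a Clifford system. -/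
def fourProduct (e : ι ⊕ Fin 4 → R) : R :=
  e (.inr 0) * e (.inr 1) * (e (.inr 2) * e (.inr 3))

/-- The system in which the four distinguished generators are multiplied by their product; this
changes the sign of their squares and preserves all other relations. -/
def flipFour (e : ι ⊕ Fin 4 → R) : ι ⊕ Fin 4 → R :=
  Sum.elim (fun i => e (.inl i)) (fun i => e (.inr i) * fourProduct e)

theorem IsClifford.antiCommute_inr (h : IsClifford (Sum.elim s fun _ => a) e) {i j : Fin 4}
    (hij : i ≠ j) : AntiCommute (e (.inr i)) (e (.inr j)) :=
  h.antiCommute (Sum.inr_injective.ne hij)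

theorem IsClifford.commute_fourProduct_inl (h : IsClifford (Sum.elim s fun _ => a) e) (i : ι) :
    Commute (e (.inl i)) (fourProduct e) := by
  have anti (j : Fin 4) : AntiCommute (e (.inl i)) (e (.inr j)) := h.antiCommute Sum.inl_ne_inr
  exact ((anti 0).mul_right (anti 1)).mul_right ((anti 2).mul_right (anti 3))

theorem IsClifford.antiCommute_fourProduct_inr (h : IsClifford (Sum.elim s fun _ => a) e)
    (i : Fin 4) : AntiCommute (e (.inr i)) (fourProduct e) := by
  have anti {i j : Fin 4} (hij : i ≠ j) := h.antiCommute_inr hij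
  have comm (i : Fin 4) : Commute (e (.inr i)) (e (.inr i)) := Commute.refl _
  fin_cases i
  · exact ((anti (by decide)).mul_right_of_commute_left (comm 0)).mul_right_of_commute
      ((anti (by decide)).mul_right (anti (by decide)))
  · exact ((anti (by decide)).mul_right_of_commute (comm 1)).mul_right_of_commute
      ((anti (by decide)).mul_right (anti (by decide)))
  · exact ((anti (by decide)).mul_right_of_commute_left (comm 2)).mul_right_of_commute_left
      ((anti (by decide)).mul_right (anti (by decide)))
  · exact ((anti (by decide)).mul_right_of_commute (comm 3)).mul_right_of_commute_left
      ((anti (by decide)).mul_right (anti (by decide)))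

theorem IsClifford.fourProduct_mul_self (h : IsClifford (Sum.elim s fun _ => a) e)
    (ha : a * a = 1) : fourProduct e * fourProduct e = 1 := by
  have anti {i j : Fin 4} (hij : i ≠ j) := h.antiCommute_inr hij
  have pair_mul_self {i j : Fin 4} (hij : i ≠ j) :
      e (.inr i) * e (.inr j) * (e (.inr i) * e (.inr j)) = -1 := by
    rw [(anti hij).mul_mul_self, h.mul_self, h.mul_self]
    simp only [Sum.elim_inr, ← Int.cast_mul, ha, Int.cast_one]
  have comm : Commute (e (.inr 0) * e (.inr 1)) (e (.inr 2) * e (.inr 3)) :=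
    Commute.mul_left ((anti (by decide)).mul_right (anti (by decide)))
      ((anti (by decide)).mul_right (anti (by decide)))
  rw [fourProduct, comm.symm.mul_mul_mul_comm, pair_mul_self (by decide),
    pair_mul_self (by decide), neg_mul_neg, one_mul]

theorem IsClifford.flipFour (h : IsClifford (Sum.elim s fun _ => a) e) (ha : a * a = 1) :
    IsClifford (Sum.elim s fun _ => -a) (flipFour e) := by
  have comm := h.commute_fourProduct_inl
  have anti := h.antiCommute_fourProduct_inr
  have mul_flip (i j : Fin 4) : e (.inr i) * fourProduct e * (e (.inr j) * fourProduct e) =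
      -(e (.inr i) * e (.inr j)) := by
    rw [(anti j).mul_mul_mul_comm, h.fourProduct_mul_self ha, mul_one]
  have anti_flip (i : ι) (j : Fin 4) : AntiCommute (e (.inl i)) (e (.inr j) * fourProduct e) :=
    (h.antiCommute Sum.inl_ne_inr).mul_right_of_commute (comm i)
  constructor
  · rintro (i | i)
    · exact h.mul_self (.inl i)
    · exact (mul_flip i i).trans (by simp [h.mul_self])
  · rintro (i | i) (j | j) hij
    · exact h.antiCommute hij
    · exact anti_flip i j
    · exact (anti_flip j i).symm
    · exact (mul_flip i j).trans (by rw [h.antiCommute hij]; exact congrArg _ (mul_flip j i).symm)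

theorem IsStarClifford.flipFour [StarRing R] (h : IsStarClifford (Sum.elim s fun _ => a) e)
    (ha : a * a = 1) : IsStarClifford (Sum.elim s fun _ => -a) (flipFour e) := by
  refine ⟨h.toIsClifford.flipFour ha, ?_⟩
  have anti {i j : Fin 4} (hij : i ≠ j) := h.antiCommute_inr hij
  have star_pair {i j : Fin 4} (hij : i ≠ j) :
      star (e (.inr i) * e (.inr j)) = -(e (.inr i) * e (.inr j)) := by
    have haR : (a : R) * a = 1 := by exact_mod_cast congrArg (Int.cast : ℤ → R) ha
    rw [star_mul, h.star_eq, h.star_eq, Sum.elim_inr, Sum.elim_inr,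
      (Int.cast_commute a (e (.inr j))).symm.mul_mul_mul_comm, haR, one_mul, anti hij.symm]
  have comm : Commute (e (.inr 2) * e (.inr 3)) (e (.inr 0) * e (.inr 1)) :=
    Commute.mul_left ((anti (by decide)).mul_right (anti (by decide)))
      ((anti (by decide)).mul_right (anti (by decide)))
  have star_product : star (fourProduct e) = fourProduct e := by
    rw [fourProduct, star_mul, star_pair (by decide), star_pair (by decide), neg_mul_neg, comm.eq]
  rintro (i | i)
  · exact h.star_eq (.inl i)
  · change star (e (.inr i) * fourProduct e) = ((-a : ℤ) : R) * (e (.inr i) * fourProduct e)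
    rw [star_mul, star_product, h.star_eq, Sum.elim_inr, Int.cast_neg, neg_mul,
      (h.antiCommute_fourProduct_inr i), mul_neg, neg_neg, ← mul_assoc, ← mul_assoc,
      (Int.cast_commute a _).eq]

end FlipFour

theorem hasClifford_iff_of_equiv (g : ι ⊕ κ ≃ ι') {s : ι' → ℤ} (hs : s ∘ g = signature ι κ) :
    HasClifford R ι κ ↔ ∃ e : ι' → R, IsClifford s e := by
  constructor
  · rintro ⟨e, he⟩
    refine ⟨e ∘ g.symm, ?_⟩
    simpa only [← hs, Function.comp_assoc, g.self_comp_symm, Function.comp_id]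
      using he.comp g.symm.injective
  · rintro ⟨e, he⟩
    exact ⟨e ∘ g, hs ▸ he.comp g.injective⟩

theorem hasStarClifford_iff_of_equiv [StarRing R] (g : ι ⊕ κ ≃ ι') {s : ι' → ℤ}
    (hs : s ∘ g = signature ι κ) :
    HasStarClifford R ι κ ↔ ∃ e : ι' → R, IsStarClifford s e := by
  constructor
  · rintro ⟨e, he⟩
    refine ⟨e ∘ g.symm, ?_⟩
    simpa only [← hs, Function.comp_assoc, g.self_comp_symm, Function.comp_id]
      using he.comp g.symm.injective
  · rintro ⟨e, he⟩
    exact ⟨e ∘ g, hs ▸ he.comp g.injective⟩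

/-- The reordering `(ι ⊕ τ) ⊕ κ ≃ (ι ⊕ κ) ⊕ τ`, which splits off some of the positive
generators. -/
def sumRightComm (ι κ τ : Type*) : (ι ⊕ τ) ⊕ κ ≃ (ι ⊕ κ) ⊕ τ :=
  (Equiv.sumAssoc ι τ κ).trans
    (((Equiv.refl ι).sumCongr (Equiv.sumComm τ κ)).trans (Equiv.sumAssoc ι κ τ).symm)

theorem sumElim_one_comp_sumRightComm (ι κ τ : Type*) :
    Sum.elim (signature ι κ) (fun _ => 1) ∘ sumRightComm ι κ τ = signature (ι ⊕ τ) κ := by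
  ext ((i | i) | i) <;> rfl

theorem sumElim_neg_one_comp_sumAssoc_symm (ι κ τ : Type*) :
    Sum.elim (signature ι κ) (fun _ => -1) ∘ (Equiv.sumAssoc ι κ τ).symm =
      signature ι (κ ⊕ τ) := by
  ext (i | i | i) <;> rfl

theorem hasClifford_sum_four_comm :
    HasClifford R (ι ⊕ Fin 4) κ ↔ HasClifford R ι (κ ⊕ Fin 4) := by
  rw [hasClifford_iff_of_equiv _ (sumElim_one_comp_sumRightComm ι κ (Fin 4)),
    hasClifford_iff_of_equiv _ (sumElim_neg_one_comp_sumAssoc_symm ι κ (Fin 4))]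
  exact ⟨fun ⟨_, he⟩ => ⟨_, he.flipFour rfl⟩, fun ⟨_, he⟩ => ⟨_, he.flipFour rfl⟩⟩

theorem hasStarClifford_sum_four_comm [StarRing R] :
    HasStarClifford R (ι ⊕ Fin 4) κ ↔ HasStarClifford R ι (κ ⊕ Fin 4) := by
  rw [hasStarClifford_iff_of_equiv _ (sumElim_one_comp_sumRightComm ι κ (Fin 4)),
    hasStarClifford_iff_of_equiv _ (sumElim_neg_one_comp_sumAssoc_symm ι κ (Fin 4))]
  exact ⟨fun ⟨_, he⟩ => ⟨_, he.flipFour rfl⟩, fun ⟨_, he⟩ => ⟨_, he.flipFour rfl⟩⟩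

end Clifford

section CliffordModules

open Module

variable {V : Type*} [AddCommGroup V] [Module ℝ V] {ι κ : Type*}

theorem IsClifford.restrict {s : ι → ℤ} {e : ι → End ℝ V} (h : IsClifford s e)
    (U : Submodule ℝ V) (hU : ∀ i, ∀ v ∈ U, e i v ∈ U) :
    IsClifford s fun i => (e i).restrict (hU i) := by
  constructor
  · intro i
    ext v
    simpa using LinearMap.congr_fun (h.mul_self i) v
  · intro i j hij
    ext v
    simpa using LinearMap.congr_fun (h.antiCommute hij) v

theorem finrank_eq_two_mul_of_antiCommute [FiniteDimensional ℝ V] {e g : End ℝ V}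
    (he : e * e = 1) (hg : g * g = 1) (heg : AntiCommute e g) :
    finrank ℝ V = 2 * finrank ℝ (LinearMap.eqLocus g LinearMap.id) := by
  have trace_g : LinearMap.trace ℝ V g = 0 := by
    have : LinearMap.trace ℝ V g = -LinearMap.trace ℝ V g :=
      calc LinearMap.trace ℝ V g = LinearMap.trace ℝ V (e * g * e) := by
            rw [LinearMap.trace_mul_comm, ← mul_assoc, he, one_mul]
        _ = -LinearMap.trace ℝ V g := by rw [heg, neg_mul, mul_assoc, he, mul_one, map_neg]
    linarith
  have isProj : LinearMap.IsProj (LinearMap.eqLocus g LinearMap.id) ((1 / 2 : ℝ) • (1 + g)) := by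
    have hg' (v : V) : g (g v) = v := LinearMap.congr_fun hg v
    refine ⟨fun v => ?_, fun v (hv : g v = v) => ?_⟩
    · simp [LinearMap.mem_eqLocus, hg', add_comm]
    · simp only [LinearMap.smul_apply, LinearMap.add_apply, Module.End.one_apply, hv,
        ← two_smul ℝ v, smul_smul]
      norm_num
  have trace_proj := isProj.trace
  rw [map_smul, map_add, trace_g, LinearMap.trace_one, smul_eq_mul] at trace_proj
  exact_mod_cast (by linarith : (finrank ℝ V : ℝ) = 2 * finrank ℝ (LinearMap.eqLocus g .id))

theorem IsClifford.hasClifford_eqLocus {x : ι ⊕ κ → End ℝ V} (hx : IsClifford (signature ι κ) x)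
    {g : End ℝ V} (hxg : ∀ i, Commute g (x i)) :
    HasClifford (End ℝ (LinearMap.eqLocus g LinearMap.id)) ι κ := by
  refine ⟨_, hx.restrict _ fun i v (hv : g v = v) => ?_⟩
  change g (x i v) = x i v
  rw [← Module.End.mul_apply, (hxg i).eq, Module.End.mul_apply, hv]

theorem four_dvd_finrank_of_hasClifford (h : HasClifford (End ℝ V) ι (Fin 2)) :
    4 ∣ finrank ℝ V := by
  obtain ⟨e, he⟩ := h
  have e_sq (i) : e (.inr i) * e (.inr i) = -1 := by simp [he.mul_self, signature]
  have anti : AntiCommute (e (.inr 1)) (e (.inr 0)) := he.antiCommute (by simp)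
  let B : QuaternionAlgebra.Basis (End ℝ V) (-1 : ℝ) 0 (-1) :=
    { i := e (.inr 0), j := e (.inr 1), k := e (.inr 0) * e (.inr 1)
      i_mul_i := by simp [e_sq]
      j_mul_j := by simp [e_sq]
      i_mul_j := rfl
      j_mul_i := by rw [anti, zero_smul, zero_sub] }
  let : Module (Quaternion ℝ) V := Module.compHom V B.liftHom.toRingHom
  have : IsScalarTower ℝ (Quaternion ℝ) V :=
    ⟨fun r q v => LinearMap.congr_fun (B.liftHom.toLinearMap.map_smul r q) v⟩
  exact ⟨_, (Quaternion.finrank_eq_four (R := ℝ) ▸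
    Module.finrank_mul_finrank ℝ (Quaternion ℝ) V).symm⟩

variable [FiniteDimensional ℝ V]

theorem HasClifford.exists_half (h : HasClifford (End ℝ V) (ι ⊕ Fin 1) (κ ⊕ Fin 1)) :
    ∃ U : Submodule ℝ V, finrank ℝ V = 2 * finrank ℝ U ∧ HasClifford (End ℝ U) ι κ := by
  obtain ⟨e, he⟩ := h
  set a := e (.inl (.inr 0)) with ha
  set b := e (.inr (.inr 0)) with hb
  have a_sq : a * a = 1 := by simp [ha, he.mul_self, signature]
  have b_sq : b * b = -1 := by simp [hb, he.mul_self, signature]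
  have hab : AntiCommute a b := he.antiCommute (by simp)
  have hx := he.comp (Function.Injective.sumMap (Sum.inl_injective (β := Fin 1) (α := ι))
    (Sum.inl_injective (β := Fin 1) (α := κ)))
  rw [signature_comp_sumMap] at hx
  refine ⟨_, finrank_eq_two_mul_of_antiCommute a_sq ?_
    (hab.mul_right_of_commute_left (Commute.refl a)), hx.hasClifford_eqLocus (g := a * b) ?_⟩
  · rw [hab.mul_mul_self, a_sq, b_sq, mul_neg, neg_neg, one_mul]
  · rintro (i | i) <;>
      exact ((he.antiCommute (by simp)).mul_right (he.antiCommute (by simp))).symm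

theorem HasClifford.exists_half_even (h : HasClifford (End ℝ V) (ι ⊕ Fin 2) κ) :
    ∃ U : Submodule ℝ V, finrank ℝ V = 2 * finrank ℝ U ∧ HasClifford (End ℝ U) Empty ι := by
  obtain ⟨e, he⟩ := h
  have e_sq (i) : e (.inl i) * e (.inl i) = 1 := by simp [he.mul_self, signature]
  set a := e (.inl (.inr 0))
  set b := e (.inl (.inr 1))
  set y : ι → End ℝ V := fun i => e (.inl (.inl i))
  have hba : AntiCommute b a := he.antiCommute (by simp)
  have hay (i) : AntiCommute a (y i) := he.antiCommute (by simp)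
  have hby (i) : AntiCommute b (y i) := he.antiCommute (by simp)
  have mul_b (i j) : b * y i * (b * y j) = -(y i * y j) := by
    rw [(hby i).mul_mul_mul_comm, e_sq, one_mul]
  have hx : IsClifford (signature Empty ι) (Sum.elim Empty.elim fun i => b * y i) := by
    refine ⟨?_, ?_⟩
    · rintro (⟨⟨⟩⟩ | i)
      simp [mul_b, y, e_sq, signature]
    · rintro (⟨⟨⟩⟩ | i) (⟨⟨⟩⟩ | j) hij
      have : y i * y j = -(y j * y i) := he.antiCommute (by simpa using hij)
      simp [AntiCommute, mul_b, this]
  refine ⟨_, finrank_eq_two_mul_of_antiCommute (e_sq _) (e_sq _) hba,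
    hx.hasClifford_eqLocus (g := a) ?_⟩
  rintro (⟨⟨⟩⟩ | i)
  exact hba.symm.mul_right (hay i)

theorem two_dvd_finrank_of_hasClifford (h : HasClifford (End ℝ V) ι (Fin 1)) :
    2 ∣ finrank ℝ V := by
  obtain ⟨e, he⟩ := h
  have e_sq : e (.inr 0) * e (.inr 0) = (-1 : ℝ) • 1 := by simp [he.mul_self, signature]
  have det_sq := congrArg LinearMap.det e_sq
  rw [map_mul, LinearMap.det_smul, map_one, mul_one] at det_sq
  by_contra odd
  rw [(Nat.not_even_iff_odd.mp (mt Even.two_dvd odd)).neg_one_pow] at det_sq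
  linarith [mul_self_nonneg (LinearMap.det (e (.inr 0)))]

/-- Every finite-dimensional real vector space carrying a Clifford system with `p` positive and `q`
negative generators has dimension divisible by `D`. -/
def CliffordDimDvd (p q D : ℕ) : Prop :=
  ∀ (V : Type u) [AddCommGroup V] [Module ℝ V] [FiniteDimensional ℝ V],
    HasClifford (End ℝ V) (Fin p) (Fin q) → D ∣ finrank ℝ V

variable {p q D : ℕ}

theorem CliffordDimDvd.mono (h : CliffordDimDvd.{u} p q D) {p' : ℕ} (hp : p ≤ p') :
    CliffordDimDvd.{u} p' q D :=
  fun V _ _ _ hV => h V (hV.comp (Fin.castLEEmb hp) (.refl _))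

theorem CliffordDimDvd.succ_succ (h : CliffordDimDvd.{u} p q D) :
    CliffordDimDvd.{u} (p + 1) (q + 1) (2 * D) := by
  intro V _ _ _ hV
  obtain ⟨U, hVU, hU⟩ :=
    (hV.comp finSumFinEquiv.toEmbedding finSumFinEquiv.toEmbedding).exists_half
  exact hVU ▸ mul_dvd_mul_left 2 (h U hU)

theorem CliffordDimDvd.add_two (h : CliffordDimDvd.{u} 0 p D) :
    CliffordDimDvd.{u} (p + 2) 0 (2 * D) := by
  intro V _ _ _ hV
  obtain ⟨U, hVU, hU⟩ := (hV.comp finSumFinEquiv.toEmbedding (.refl _)).exists_half_even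
  exact hVU ▸ mul_dvd_mul_left 2 (h U (hU.comp .ofIsEmpty (.refl _)))

theorem cliffordDimDvd_add_four_comm :
    CliffordDimDvd.{u} (p + 4) q D ↔ CliffordDimDvd.{u} p (q + 4) D := by
  have swap (V : Type u) [AddCommGroup V] [Module ℝ V] :
      HasClifford (End ℝ V) (Fin (p + 4)) (Fin q) ↔
        HasClifford (End ℝ V) (Fin p) (Fin (q + 4)) :=
    ⟨fun h => (hasClifford_sum_four_comm.1 (h.comp finSumFinEquiv.toEmbedding (.refl _))).comp
      (.refl _) finSumFinEquiv.symm.toEmbedding,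
    fun h => (hasClifford_sum_four_comm.2 (h.comp (.refl _) finSumFinEquiv.toEmbedding)).comp
      finSumFinEquiv.symm.toEmbedding (.refl _)⟩
  simp only [CliffordDimDvd, swap]

theorem CliffordDimDvd.add_eight (h : CliffordDimDvd.{u} p 0 D) :
    CliffordDimDvd.{u} (p + 8) 0 (2 * (2 * (2 * (2 * D)))) :=
  (cliffordDimDvd_add_four_comm (p := p + 4)).2 h.succ_succ.succ_succ.succ_succ.succ_succ

end CliffordModules

/-- The binary logarithm of the least dimension of a real module over the Clifford algebra with
`m` positive generators. -/
def cliffordExponent (m : ℕ) : ℕ :=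
  4 * (m / 8) + (![0, 0, 1, 2, 3, 3, 4, 4] : Fin 8 → ℕ) (Fin.ofNat 8 m)

theorem cliffordExponent_add_eight (m : ℕ) :
    cliffordExponent (m + 8) = cliffordExponent m + 4 := by
  have : Fin.ofNat 8 (m + 8) = Fin.ofNat 8 m := by simp [Fin.ofNat]
  simp only [cliffordExponent, this, Nat.add_div_right m (by norm_num : 0 < 8)]
  ring

theorem cliffordDimDvd_two_pow (m : ℕ) : CliffordDimDvd.{u} m 0 (2 ^ cliffordExponent m) := by
  have four : CliffordDimDvd.{u} 4 0 8 :=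
    CliffordDimDvd.add_two fun _ _ _ _ => four_dvd_finrank_of_hasClifford
  have six : CliffordDimDvd.{u} 6 0 16 :=
    CliffordDimDvd.add_two (cliffordDimDvd_add_four_comm.1 four)
  induction m using Nat.strong_induction_on with | _ m ih
  rcases lt_or_ge m 8 with hm | hm
  · interval_cases m
    · exact fun _ _ _ _ _ => one_dvd _
    · exact fun _ _ _ _ _ => one_dvd _
    · exact CliffordDimDvd.add_two (D := 1) fun _ _ _ _ _ => one_dvd _
    · exact CliffordDimDvd.add_two (D := 2) fun _ _ _ _ => two_dvd_finrank_of_hasClifford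
    · exact four
    · exact four.mono (by norm_num)
    · exact six
    · exact six.mono (by norm_num)
  · obtain ⟨m, rfl⟩ := Nat.exists_eq_add_of_le' hm
    convert (ih m (by lia)).add_eight using 1
    rw [cliffordExponent_add_eight]
    ring

theorem two_pow_dvd_finrank_of_hasClifford {V : Type*} [AddCommGroup V] [Module ℝ V] {m : ℕ}
    (h : HasClifford (Module.End ℝ V) (Fin (m + 1)) (Fin 1)) :
    2 ^ (cliffordExponent m + 1) ∣ Module.finrank ℝ V := by
  by_cases hV : FiniteDimensional ℝ V
  · exact pow_succ' 2 _ ▸ (cliffordDimDvd_two_pow m).succ_succ V h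
  -- `finrank` is `0` on infinite-dimensional spaces
  · exact Module.finrank_of_not_finite hV ▸ dvd_zero _

theorem two_pow_cliffordExponent_dvd_iff {N : ℕ} (hN : N ≠ 0) (m : ℕ) :
    2 ^ cliffordExponent m ∣ N ↔ ((m + 1 : ℕ) : ℤ) ≤ hrRho ((N : ℚ) / 2) + 2 := by
  have val_half : padicValRat 2 ((N : ℚ) / 2) = (padicValNat 2 N : ℤ) - 1 := by
    rw [padicValRat.div (Nat.cast_ne_zero.2 hN) two_ne_zero, padicValRat.of_nat]
    exact congrArg _ (padicValRat.self (by norm_num))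
  rw [padicValNat_dvd_iff_le hN, hrRho, val_half]
  generalize padicValNat 2 N = v
  obtain ⟨b, t, ht, rfl⟩ : ∃ b t, t < 8 ∧ m = 8 * b + t := ⟨m / 8, m % 8, by lia, by lia⟩
  obtain ⟨a, r, hr, rfl⟩ : ∃ a r, r < 4 ∧ v = 4 * a + r := ⟨v / 4, v % 4, by lia, by lia⟩
  have ofNat_eq : Fin.ofNat 8 (8 * b + t) = ⟨t, ht⟩ := Fin.ext (by simp [Fin.ofNat]; lia)
  rw [cliffordExponent, ofNat_eq, show (8 * b + t) / 8 = b by lia]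
  obtain ⟨quotient, remainder⟩ : (((4 * a + r : ℕ) : ℤ) - 1) / 4 = a - (if r = 0 then 1 else 0) ∧
      ((((4 * a + r : ℕ) : ℤ) - 1) % 4).toNat = if r = 0 then 3 else r - 1 := by
    split_ifs <;> lia
  rw [quotient, remainder]
  interval_cases r <;> interval_cases t <;> simp <;> lia

section Construction

variable {R : Type*} [Ring R] [StarRing R] {ι κ : Type*}

theorem IsStarClifford.map {S : Type*} [Ring S] [StarRing S] {s : ι → ℤ} {e : ι → R}
    (h : IsStarClifford s e) (f : R →+* S) (hf : ∀ x, f (star x) = star (f x)) :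
    IsStarClifford s (f ∘ e) :=
  ⟨h.toIsClifford.map f, fun i => by simp [← hf, h.star_eq]⟩

theorem HasStarClifford.fin_three (h : HasStarClifford R ι (Fin 2)) :
    HasStarClifford R (Fin 0) (Fin 3) := by
  obtain ⟨e, he⟩ := h
  set x := e (.inr 0) with hx
  set y := e (.inr 1) with hy
  have hx_sq : x * x = -1 := by simp [hx, he.mul_self, signature]
  have hy_sq : y * y = -1 := by simp [hy, he.mul_self, signature]
  have hx_star : star x = -x := by simp [hx, he.star_eq, signature]
  have hy_star : star y = -y := by simp [hy, he.star_eq, signature]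
  have hxy : AntiCommute x y := he.antiCommute (by simp)
  have hx_xy : AntiCommute x (x * y) := hxy.mul_right_of_commute_left (Commute.refl x)
  have hy_xy : AntiCommute y (x * y) := hxy.symm.mul_right_of_commute (Commute.refl y)
  refine ⟨Sum.elim Fin.elim0 ![x, y, x * y], ⟨?_, ?_⟩, ?_⟩
  · rintro (i | i)
    · exact i.elim0
    · fin_cases i <;> simp [signature, hx_sq, hy_sq, hxy.mul_mul_self]
  · rintro (i | i) (j | j) hij
    · exact i.elim0
    · exact i.elim0
    · exact j.elim0
    · fin_cases i <;> fin_cases j <;> first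
        | exact absurd rfl hij
        | simp [hxy, hx_xy, hy_xy, hxy.symm, hx_xy.symm, hy_xy.symm]
  · rintro (i | i)
    · exact i.elim0
    · fin_cases i
      · simp [signature, hx_star]
      · simp [signature, hy_star]
      · have hyx : y * x = -(x * y) := hxy.symm
        simp [signature, hx_star, hy_star, hyx]

variable {n : Type*} [Fintype n] [DecidableEq n]

/-- The block matrices `diag(e i, -e i)`, `[[0, 1], [1, 0]]` and `[[0, -1], [1, 0]]`, which extend
a Clifford system by one positive and one negative generator. -/
def blockDouble (e : ι → Matrix n n R) : ι ⊕ Fin 2 → Matrix (n ⊕ n) (n ⊕ n) R :=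
  Sum.elim (fun i => fromBlocks (e i) 0 0 (-e i)) ![fromBlocks 0 1 1 0, fromBlocks 0 (-1) 1 0]

theorem IsStarClifford.blockDouble {s : ι → ℤ} {e : ι → Matrix n n R} (h : IsStarClifford s e) :
    IsStarClifford (Sum.elim s ![1, -1]) (blockDouble e) := by
  have cast_eq (k : ℤ) :
      (k : Matrix (n ⊕ n) (n ⊕ n) R) = fromBlocks (k : Matrix n n R) 0 0 (k : Matrix n n R) := by
    ext (i | i) (j | j) <;> simp [Matrix.intCast_apply]
  refine ⟨⟨?_, ?_⟩, ?_⟩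
  · rintro (i | i)
    · simp [_root_.blockDouble, fromBlocks_multiply, h.mul_self, cast_eq]
    · fin_cases i <;>
        simp [_root_.blockDouble, fromBlocks_multiply, ← fromBlocks_one, fromBlocks_neg]
  · rintro (i | i) (j | j) hij
    · have : e i * e j = -(e j * e i) := h.antiCommute (by simpa using hij)
      simp [AntiCommute, _root_.blockDouble, fromBlocks_multiply, this, fromBlocks_neg]
    · fin_cases j <;>
        simp [AntiCommute, _root_.blockDouble, fromBlocks_multiply, fromBlocks_neg]
    · fin_cases i <;>
        simp [AntiCommute, _root_.blockDouble, fromBlocks_multiply, fromBlocks_neg]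
    · fin_cases i <;> fin_cases j <;> first
        | exact absurd rfl hij
        | simp [AntiCommute, _root_.blockDouble, fromBlocks_multiply, fromBlocks_neg]
  · rintro (i | i)
    · have : (e i)ᴴ = s i * e i := h.star_eq i
      simp [_root_.blockDouble, star_eq_conjTranspose, fromBlocks_conjTranspose, this, cast_eq,
        fromBlocks_multiply]
    · fin_cases i <;> simp [_root_.blockDouble, star_eq_conjTranspose, fromBlocks_conjTranspose,
        fromBlocks_neg]

theorem HasStarClifford.blockDouble (h : HasStarClifford (Matrix n n R) ι κ) :
    HasStarClifford (Matrix (n ⊕ n) (n ⊕ n) R) (ι ⊕ Fin 1) (κ ⊕ Fin 1) := by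
  obtain ⟨e, he⟩ := h
  rw [hasStarClifford_iff_of_equiv (s := Sum.elim (signature ι κ) ![1, -1])
    ((Equiv.sumSumSumComm ι (Fin 1) κ (Fin 1)).trans ((Equiv.refl _).sumCongr finSumFinEquiv))]
  · exact ⟨_, he.blockDouble⟩
  · ext ((i | i) | (i | i))
    · rfl
    · fin_cases i; rfl
    · rfl
    · fin_cases i; rfl

end Construction

/-- There is a Clifford system of real `D × D` matrices with `p` symmetric and `q` skew-symmetric
generators. -/
def HasMatrixClifford (p q D : ℕ) : Prop :=
  HasStarClifford (Matrix (Fin D) (Fin D) ℝ) (Fin p) (Fin q)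

section MatrixClifford

variable {p q D : ℕ}

theorem HasStarClifford.hasMatrixClifford {n : Type*} [Fintype n] [DecidableEq n]
    (h : HasStarClifford (Matrix n n ℝ) (Fin p) (Fin q)) (hn : Fintype.card n = D) :
    HasMatrixClifford p q D := by
  obtain ⟨e, he⟩ := h
  let φ := Matrix.reindexAlgEquiv ℝ ℝ (Fintype.equivFinOfCardEq hn)
  exact ⟨_, he.map (φ : Matrix n n ℝ →+* _) fun M => (conjTranspose_reindex _ _ M).symm⟩

theorem HasMatrixClifford.mono (h : HasMatrixClifford p q D) {p' q' : ℕ} (hp : p' ≤ p)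
    (hq : q' ≤ q) : HasMatrixClifford p' q' D :=
  h.comp (Fin.castLEEmb hp) (Fin.castLEEmb hq)

theorem HasMatrixClifford.succ_succ (h : HasMatrixClifford p q D) :
    HasMatrixClifford (p + 1) (q + 1) (2 * D) :=
  (h.blockDouble.comp finSumFinEquiv.symm.toEmbedding
    finSumFinEquiv.symm.toEmbedding).hasMatrixClifford (by simp [two_mul])

theorem HasMatrixClifford.add_four (h : HasMatrixClifford p (q + 4) D) :
    HasMatrixClifford (p + 4) q D :=
  (hasStarClifford_sum_four_comm.2 (h.comp (.refl _) finSumFinEquiv.toEmbedding)).comp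
    finSumFinEquiv.symm.toEmbedding (.refl _)

theorem HasMatrixClifford.add_eight (h : HasMatrixClifford p 0 D) :
    HasMatrixClifford (p + 8) 0 (2 * (2 * (2 * (2 * D)))) :=
  h.succ_succ.succ_succ.succ_succ.succ_succ.add_four

theorem HasMatrixClifford.mul_right (h : HasMatrixClifford p q D) (k : ℕ) :
    HasMatrixClifford p q (D * k) := by
  obtain ⟨e, he⟩ := h
  let φ : Matrix (Fin D) (Fin D) ℝ →+* Matrix (Fin D × Fin k) (Fin D × Fin k) ℝ :=
    (blockDiagonalRingHom (Fin D) (Fin k) ℝ).comp (Pi.constRingHom (Fin k) _)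
  have star_map (M) : φ (star M) = star (φ M) := (blockDiagonal_conjTranspose fun _ => M).symm
  exact HasStarClifford.hasMatrixClifford ⟨_, he.map φ star_map⟩ (by simp)

theorem hasMatrixClifford_one_zero_one : HasMatrixClifford 1 0 1 := by
  have : Subsingleton (Fin 1 ⊕ Fin 0) := (Equiv.sumEmpty (Fin 1) (Fin 0)).subsingleton
  refine ⟨fun _ => 1, ⟨?_, fun i j hij => absurd (Subsingleton.elim i j) hij⟩, ?_⟩ <;>
  · rintro (i | i)
    · simp [signature]
    · exact i.elim0

theorem hasMatrixClifford_two_pow (m : ℕ) : HasMatrixClifford m 0 (2 ^ cliffordExponent m) := by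
  have one := hasMatrixClifford_one_zero_one
  have three : HasMatrixClifford 3 2 4 := one.succ_succ.succ_succ
  have five : HasMatrixClifford 5 0 8 :=
    (HasMatrixClifford.succ_succ (D := 4) three.fin_three).add_four
  have eight : HasMatrixClifford 8 0 16 := (one.mono zero_le_one le_rfl).add_eight
  induction m using Nat.strong_induction_on with | _ m ih
  rcases lt_or_ge m 8 with hm | hm
  · interval_cases m
    · exact one.mono zero_le_one le_rfl
    · exact one
    · exact one.succ_succ.mono le_rfl zero_le_one
    · exact three.mono le_rfl (by norm_num)
    · exact five.mono (by norm_num) le_rfl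
    · exact five
    · exact eight.mono (by norm_num) le_rfl
    · exact eight.mono (by norm_num) le_rfl
  · obtain ⟨m, rfl⟩ := Nat.exists_eq_add_of_le' hm
    convert (ih m (by lia)).add_eight using 1
    rw [cliffordExponent_add_eight]
    ring

theorem hasMatrixClifford_succ_self (n : ℕ) : HasMatrixClifford (n + 1) n (2 ^ n) := by
  induction n with
  | zero => exact hasMatrixClifford_one_zero_one
  | succ n ih => exact pow_succ' 2 n ▸ ih.succ_succ

end MatrixClifford

section CliffordSums

variable {ι R : Type*} [Fintype ι] [Ring R] [Algebra ℝ R]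

theorem IsClifford.sum_mul_mul_self {s : ι → ℤ} {e y : ι → R} (h : IsClifford s e)
    (hey : ∀ i j, Commute (e i) (y j)) (hy : ∀ i j, Commute (y i) (y j)) :
    (∑ i, e i * y i) * (∑ i, e i * y i) = ∑ i, s i * (y i * y i) := by
  classical
  have anticomm (i j) : e i * e j + e j * e i = if i = j then (2 : ℝ) • (s i : R) else 0 := by
    split_ifs with hij
    · rw [← hij, h.mul_self, two_smul]
    · rw [h.antiCommute hij, neg_add_cancel]
  have expand : (∑ i, e i * y i) * (∑ i, e i * y i) = ∑ i, ∑ j, e i * e j * (y i * y j) := by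
    simp only [Finset.sum_mul_sum, ((hey _ _).symm.mul_mul_mul_comm _ _)]
  have expand_swap : (∑ i, e i * y i) * (∑ i, e i * y i) = ∑ i, ∑ j, e j * e i * (y i * y j) := by
    rw [expand, Finset.sum_comm]
    exact Finset.sum_congr rfl fun i _ => Finset.sum_congr rfl fun j _ => by rw [(hy j i).eq]
  apply smul_right_injective R (two_ne_zero (α := ℝ))
  calc (2 : ℝ) • ((∑ i, e i * y i) * (∑ i, e i * y i))
      = ∑ i, ∑ j, (e i * e j + e j * e i) * (y i * y j) := by
        rw [two_smul]
        nth_rewrite 1 [expand]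
        simp only [expand_swap, add_mul, Finset.sum_add_distrib]
    _ = (2 : ℝ) • ∑ i, s i * (y i * y i) := by
        simp [anticomm, ite_mul, Finset.smul_sum]

theorem IsClifford.sum_smul_mul_self {s : ι → ℤ} {e : ι → R} (h : IsClifford s e) (x : ι → ℝ) :
    (∑ i, x i • e i) * (∑ i, x i • e i) = (∑ i, s i * x i ^ 2) • (1 : R) := by
  have := h.sum_mul_mul_self (y := fun i => algebraMap ℝ R (x i))
    (fun i j => (Algebra.commutes (x j) (e i)).symm) (fun i j => Algebra.commutes _ _)
  simpa [Algebra.smul_def, Algebra.commutes, pow_two] using this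

theorem IsClifford.dirac_mul_self {G A d x : ι → R} (hG : IsClifford (fun _ => -1) G)
    (hGA : ∀ i j, AntiCommute (G i) (A j)) (hGd : ∀ i j, Commute (G i) (d j))
    (hGx : ∀ i j, Commute (G i) (x j)) (hAd : ∀ i j, Commute (A i) (d j))
    (hd : ∀ i j, Commute (d i) (d j)) (hdx : Pairwise fun i j => Commute (d i) (x j)) :
    (∑ i, (G i * d i + A i * x i)) * (∑ i, (G i * d i + A i * x i)) =
      (∑ i, A i * x i) * (∑ i, A i * x i) - ∑ i, d i * d i +
        ∑ i, G i * A i * (d i * x i - x i * d i) := by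
  have cross_term (i j) : G i * d i * (A j * x j) + A j * x j * (G i * d i) =
      G i * A j * (d i * x j - x j * d i) := by
    rw [(hAd j i).symm.mul_mul_mul_comm, (hGx i j).symm.mul_mul_mul_comm, (hGA i j).symm, mul_sub,
      neg_mul, sub_eq_add_neg]
  have cross : (∑ i, G i * d i) * (∑ i, A i * x i) + (∑ i, A i * x i) * (∑ i, G i * d i) =
      ∑ i, G i * A i * (d i * x i - x i * d i) := by
    rw [Finset.sum_mul_sum, Finset.sum_mul_sum, Finset.sum_comm (γ := ι),
      ← Finset.sum_add_distrib]
    simp only [← Finset.sum_add_distrib, cross_term]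
    exact Finset.sum_congr rfl fun j _ => Finset.sum_eq_single_of_mem j (Finset.mem_univ j)
      fun i _ hij => by rw [(hdx hij).eq, sub_self, mul_zero]
  have square := hG.sum_mul_mul_self hGd hd
  simp only [Int.cast_neg, Int.cast_one, neg_mul, one_mul, Finset.sum_neg_distrib] at square
  rw [Finset.sum_add_distrib, add_mul, mul_add, mul_add, square, ← cross]
  abel

end CliffordSums

theorem exists_isStarClifford_antiCommute_Jreal {N m : ℕ} (h : HasMatrixClifford m 0 N) :
    ∃ e : Fin (m + 1) → Matrix (Fin N ⊕ Fin N) (Fin N ⊕ Fin N) ℝ,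
      IsStarClifford (fun _ => 1) e ∧ ∀ i, AntiCommute (e i) (Jreal N) := by
  obtain ⟨e, he⟩ := h
  let g : Fin m ⊕ Fin 1 → (Fin m ⊕ Fin 0) ⊕ Fin 2 := Sum.map Sum.inl fun _ => 0
  have hg : g.Injective := Sum.inl_injective.sumMap (Function.injective_of_subsingleton _)
  have pos : Sum.elim (signature (Fin m) (Fin 0)) ![1, -1] ∘ g ∘ finSumFinEquiv.symm =
      fun _ : Fin (m + 1) => 1 := by
    ext i
    rcases h : finSumFinEquiv.symm i with j | j <;> simp [g, h, signature]
  refine ⟨blockDouble e ∘ g ∘ finSumFinEquiv.symm,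
    pos ▸ he.blockDouble.comp (hg.comp finSumFinEquiv.symm.injective), fun i => ?_⟩
  refine he.blockDouble.antiCommute (j := .inr 1) ?_
  rcases h : finSumFinEquiv.symm i with j | j <;> simp [g, h]

theorem exists_linearMap_sq_eq_norm_sq {N n : ℕ} (hN : N ≠ 0)
    (h : (n : ℤ) ≤ hrRho ((N : ℚ) / 2) + 2) :
    ∃ f : EuclideanSpace ℝ (Fin n) →ₗ[ℝ] Matrix (Fin N ⊕ Fin N) (Fin N ⊕ Fin N) ℝ,
      ∀ v, (f v)ᵀ = f v ∧ (f v)ᵀ * Jreal N + Jreal N * f v = 0 ∧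
        (f v) ^ 2 = (‖v‖ ^ 2 : ℝ) • (1 : Matrix (Fin N ⊕ Fin N) (Fin N ⊕ Fin N) ℝ) := by
  rcases n with _ | m
  · exact ⟨0, fun v => by simp [Subsingleton.elim v 0]⟩
  obtain ⟨k, rfl⟩ := (two_pow_cliffordExponent_dvd_iff hN m).2 h
  obtain ⟨e, he, heJ⟩ :=
    exists_isStarClifford_antiCommute_Jreal ((hasMatrixClifford_two_pow m).mul_right k)
  have transpose_e (i) : (e i)ᵀ = e i := by
    simpa [star_eq_conjTranspose, conjTranspose_eq_transpose_of_trivial] using he.star_eq i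
  let f : EuclideanSpace ℝ (Fin (m + 1)) →ₗ[ℝ] Matrix _ _ ℝ :=
    ∑ i, (EuclideanSpace.proj (𝕜 := ℝ) i).toLinearMap.smulRight (e i)
  have f_apply (v) : f v = ∑ i, v i • e i := by simp [f]
  have transpose_f (v) : (f v)ᵀ = f v := by simp [f_apply, transpose_sum, transpose_e]
  refine ⟨f, fun v => ⟨transpose_f v, ?_, ?_⟩⟩
  · rw [transpose_f, f_apply, Finset.sum_mul, Finset.mul_sum, ← Finset.sum_add_distrib]
    exact Finset.sum_eq_zero fun i _ => by
      rw [smul_mul_assoc, heJ i, mul_smul_comm, smul_neg, neg_add_cancel]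
  · rw [pow_two, f_apply, he.sum_smul_mul_self, EuclideanSpace.norm_sq_eq]
    simp

section Cokernel

open Module Topology

variable {E F : Type*} [NormedAddCommGroup E] [NormedSpace ℝ E] [CompleteSpace E]
  [NormedAddCommGroup F]

theorem eventually_isCompl_range [NormedSpace ℝ F] [CompleteSpace F] {T₀ : E →L[ℝ] F}
    {C : Submodule ℝ F} [CompleteSpace C] (hC : IsCompl T₀.range C) (hker : T₀.ker = ⊥) :
    ∀ᶠ T in 𝓝 T₀, IsCompl T.range C := by
  have coprod_eq (T : E →L[ℝ] F) : T.coprod C.subtypeL =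
      T.comp (.fst ℝ E C) + C.subtypeL.comp (.snd ℝ E C) := by
    ext <;> simp
  have continuous_coprod : Continuous fun T : E →L[ℝ] F => T.coprod C.subtypeL := by
    simp only [coprod_eq]
    exact (continuous_id.clm_comp continuous_const).add continuous_const
  have coprod_mem : T₀.coprod C.subtypeL ∈
      Set.range fun e : (E × C) ≃L[ℝ] F => (e : E × C →L[ℝ] F) :=
    ⟨T₀.coprodSubtypeLEquivOfIsCompl hC hker, rfl⟩
  filter_upwards [continuous_coprod.continuousAt.eventually_mem
    (ContinuousLinearEquiv.isOpen.mem_nhds coprod_mem)] with T ⟨e, he⟩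
  have e_apply (x : E) (y : C) : e (x, y) = T x + y := DFunLike.congr_fun he (x, y)
  constructor
  · rw [Submodule.disjoint_def]
    rintro _ ⟨x, rfl⟩ hx
    have : e (x, 0) = e (0, ⟨T x, hx⟩) := by simp [e_apply]
    have hx0 : x = 0 := congrArg Prod.fst (e.injective this)
    simp [hx0]
  · refine codisjoint_iff.2 (eq_top_iff.2 fun z _ => ?_)
    obtain ⟨⟨x, y⟩, rfl⟩ := e.surjective z
    rw [e_apply]
    exact Submodule.add_mem_sup ⟨x, rfl⟩ y.2

variable [InnerProductSpace ℝ F] [CompleteSpace F]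

theorem finrank_range_orthogonal_eq {X : Type*} [TopologicalSpace X] [PreconnectedSpace X]
    {T : X → E →L[ℝ] F} (hT : Continuous T) (hT' : ∀ t, ∃ K, AntilipschitzWith K (T t)) (s t : X) :
    finrank ℝ (T s).rangeᗮ = finrank ℝ (T t).rangeᗮ := by
  have isCompl (t : X) : IsCompl (T t).range (T t).rangeᗮ := by
    obtain ⟨K, hK⟩ := hT' t
    have : CompleteSpace (T t).range :=
      (hK.isClosed_range (T t).uniformContinuous).completeSpace_coe
    exact Submodule.isCompl_orthogonal _
  have ker_eq_bot (t : X) : (T t).ker = ⊥ := by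
    obtain ⟨K, hK⟩ := hT' t
    exact LinearMap.ker_eq_bot.2 hK.injective
  refine IsLocallyConstant.apply_eq_of_preconnectedSpace (f := fun t => finrank ℝ (T t).rangeᗮ)
    ((IsLocallyConstant.iff_eventually_eq _).2 fun t => ?_) s t
  filter_upwards [hT.continuousAt.eventually
    (eventually_isCompl_range (isCompl t) (ker_eq_bot t))] with s hs
  exact ((Submodule.quotientEquivOfIsCompl _ _ (isCompl s)).symm.trans
    (Submodule.quotientEquivOfIsCompl _ _ hs)).finrank_eq

end Cokernel

section JointEigenvectors

open Module Module.End

variable {E ι : Type*} [NormedAddCommGroup E] [InnerProductSpace ℝ E]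

theorem mem_iSup_iInf_eigenspace_of_commute {X : ι → End ℝ E} (hX : ∀ i, (X i).IsSymmetric)
    (hcomm : Pairwise fun i j => Commute (X i) (X j)) {B : Submodule ℝ E} [FiniteDimensional ℝ B]
    (hB : ∀ i, ∀ v ∈ B, X i v ∈ B) {v : E} (hv : v ∈ B) :
    v ∈ ⨆ χ : ι → ℝ, ⨅ i, eigenspace (X i) (χ i) := by
  have restrict_comm : Pairwise fun i j =>
      Commute ((X i).restrict (hB i)) ((X j).restrict (hB j)) := fun i j hij =>
    LinearMap.ext fun w => Subtype.ext (LinearMap.congr_fun (hcomm hij).eq w)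
  have iSup_eq_top := LinearMap.IsSymmetric.iSup_iInf_eq_top_of_commute
    (fun i => (hX i).restrict_invariant (hB i)) restrict_comm
  have mem : (⟨v, hv⟩ : B) ∈ ⨆ χ : ι → ℝ, ⨅ i, eigenspace ((X i).restrict (hB i)) (χ i) :=
    iSup_eq_top ▸ Submodule.mem_top
  have mem_map := Submodule.mem_map_of_mem (f := B.subtype) mem
  rw [Submodule.map_iSup] at mem_map
  refine SetLike.le_def.1 (iSup_mono fun χ => ?_) mem_map
  rintro _ ⟨w, hw, rfl⟩
  simp only [SetLike.mem_coe, Submodule.mem_iInf, mem_eigenspace_iff] at hw ⊢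
  exact fun i => congrArg B.subtype (hw i)

theorem norm_sq_sum_of_mem_iInf_eigenspace {X : ι → End ℝ E} (hX : ∀ i, (X i).IsSymmetric)
    {g : (ι → ℝ) → E} (hg : ∀ χ, g χ ∈ ⨅ i, eigenspace (X i) (χ i)) (s : Finset (ι → ℝ)) :
    ‖∑ χ ∈ s, g χ‖ ^ 2 = ∑ χ ∈ s, ‖g χ‖ ^ 2 :=
  (LinearMap.IsSymmetric.orthogonalFamily_iInf_eigenspaces hX).norm_sum (fun χ => ⟨g χ, hg χ⟩) s

theorem apply_mem_iInf_eigenspace_of_commute {X : ι → End ℝ E} {χ : ι → ℝ} {v : E}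
    (hv : v ∈ ⨅ i, eigenspace (X i) (χ i)) {A : End ℝ E} (hA : ∀ i, Commute A (X i)) :
    A v ∈ ⨅ i, eigenspace (X i) (χ i) := by
  simp only [Submodule.mem_iInf, mem_eigenspace_iff] at hv ⊢
  intro i
  rw [← Module.End.mul_apply, ← (hA i).eq, Module.End.mul_apply, hv, map_smul]

theorem coercive_sum_mul_of_commute [Fintype ι] {A X : ι → End ℝ E}
    (hX : ∀ i, (X i).IsSymmetric) (hAX : ∀ i j, Commute (A i) (X j)) {κ : ℝ}
    (hA : ∀ (x : ι → ℝ) w, κ * (∑ i, x i ^ 2) * ‖w‖ ^ 2 ≤ ‖∑ i, x i • A i w‖ ^ 2) {v : E}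
    (hv : v ∈ ⨆ χ : ι → ℝ, ⨅ i, eigenspace (X i) (χ i)) :
    κ * ∑ i, ‖X i v‖ ^ 2 ≤ ‖∑ i, A i (X i v)‖ ^ 2 := by
  obtain ⟨f, hf, hfv⟩ := (Submodule.mem_iSup_iff_exists_finsupp _ _).1 hv
  rw [Finsupp.sum] at hfv
  have X_f (i χ) : X i (f χ) = χ i • f χ :=
    mem_eigenspace_iff.1 ((Submodule.mem_iInf _).1 (hf χ) i)
  have X_v (i) : X i v = ∑ χ ∈ f.support, χ i • f χ := by simp only [← hfv, map_sum, X_f]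
  have norm_X_v (i) : ‖X i v‖ ^ 2 = ∑ χ ∈ f.support, χ i ^ 2 * ‖f χ‖ ^ 2 := by
    rw [X_v, norm_sq_sum_of_mem_iInf_eigenspace hX fun χ => Submodule.smul_mem _ (χ i) (hf χ)]
    simp [norm_smul, mul_pow]
  have sum_A_mem (χ) : ∑ i, χ i • A i (f χ) ∈ ⨅ i, eigenspace (X i) (χ i) := sum_mem fun i _ =>
    Submodule.smul_mem _ _ (apply_mem_iInf_eigenspace_of_commute (hf χ) (hAX i))
  have sum_A_X_v : ∑ i, A i (X i v) = ∑ χ ∈ f.support, ∑ i, χ i • A i (f χ) := by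
    simp only [X_v, map_sum, map_smul]
    exact Finset.sum_comm
  calc κ * ∑ i, ‖X i v‖ ^ 2 = ∑ χ ∈ f.support, κ * (∑ i, χ i ^ 2) * ‖f χ‖ ^ 2 := by
        simp only [norm_X_v, mul_assoc, Finset.sum_mul]
        rw [Finset.sum_comm, Finset.mul_sum]
    _ ≤ ∑ χ ∈ f.support, ‖∑ i, χ i • A i (f χ)‖ ^ 2 := Finset.sum_le_sum fun χ _ => hA χ (f χ)
    _ = ‖∑ i, A i (X i v)‖ ^ 2 := by
        rw [sum_A_X_v, norm_sq_sum_of_mem_iInf_eigenspace hX sum_A_mem]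

end JointEigenvectors

section Oscillator

open Module

variable {ι : Type*} [DecidableEq ι] {W : Type*} [AddCommGroup W] [Module ℝ W]

theorem sub_single_add_single {k : ι → ℕ} {i : ι} (hk : k i ≠ 0) :
    k - Pi.single i 1 + Pi.single i 1 = k := by
  refine tsub_add_cancel_of_le fun j => ?_
  rcases eq_or_ne j i with rfl | hj
  · simpa using Nat.one_le_iff_ne_zero.2 hk
  · simp [hj]

theorem add_single_sub_single_comm (k : ι → ℕ) {i j : ι} (hij : i ≠ j) :
    k + Pi.single i 1 - Pi.single j 1 = k - Pi.single j 1 + Pi.single i 1 := by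
  ext l
  rcases eq_or_ne l j with rfl | hl
  · simp [hij.symm]
  · simp [hl]

/-- The lowering operator of the `i`-th coordinate on formal Hermite expansions with coefficients
in `W`, with matrix entries `c`; the harmonic oscillator has `c j = √j`. -/
def lower (c : ℕ → ℝ) (i : ι) : End ℝ ((ι → ℕ) → W) where
  toFun w k := c (k i + 1) • w (k + Pi.single i 1)
  map_add' w w' := by ext; simp
  map_smul' r w := by ext; simp [smul_comm r]

/-- The raising operator of the `i`-th coordinate, the formal adjoint of `lower c i`. The
truncation `0 - 1 = 0` of the index is harmless when `c 0 = 0`. -/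
def raise (c : ℕ → ℝ) (i : ι) : End ℝ ((ι → ℕ) → W) where
  toFun w k := c (k i) • w (k - Pi.single i 1)
  map_add' w w' := by ext; simp
  map_smul' r w := by ext; simp [smul_comm r]

variable {c : ℕ → ℝ}

theorem lower_apply (i : ι) (w : (ι → ℕ) → W) (k : ι → ℕ) :
    lower c i w k = c (k i + 1) • w (k + Pi.single i 1) :=
  rfl

theorem raise_apply (i : ι) (w : (ι → ℕ) → W) (k : ι → ℕ) :
    raise c i w k = c (k i) • w (k - Pi.single i 1) :=
  rfl

theorem commute_lower (i j : ι) :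
    Commute (lower c i : End ℝ ((ι → ℕ) → W)) (lower c j) := by
  rcases eq_or_ne i j with rfl | hij
  · rfl
  ext w k
  simp [lower_apply, hij, hij.symm, smul_comm (c (k i + 1)), add_right_comm k]

theorem commute_raise (i j : ι) :
    Commute (raise c i : End ℝ ((ι → ℕ) → W)) (raise c j) := by
  rcases eq_or_ne i j with rfl | hij
  · rfl
  ext w k
  simp [raise_apply, hij, hij.symm, smul_comm (c (k i)), tsub_right_comm (a := k)]

theorem commute_lower_raise {i j : ι} (hij : i ≠ j) :
    Commute (lower c i : End ℝ ((ι → ℕ) → W)) (raise c j) := by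
  ext w k
  simp [lower_apply, raise_apply, hij, hij.symm, smul_comm (c (k i + 1)),
    add_single_sub_single_comm k hij]

theorem lower_raise_apply (i : ι) (w : (ι → ℕ) → W) (k : ι → ℕ) :
    lower c i (raise c i w) k = c (k i + 1) ^ 2 • w k := by
  simp [lower_apply, raise_apply, smul_smul, pow_two]

theorem raise_lower_apply (hc : c 0 = 0) (i : ι) (w : (ι → ℕ) → W) (k : ι → ℕ) :
    raise c i (lower c i w) k = c (k i) ^ 2 • w k := by
  rcases eq_or_ne (k i) 0 with hk | hk
  · simp [raise_apply, hk, hc]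
  · simp [lower_apply, raise_apply, sub_single_add_single hk, smul_smul, pow_two,
      Nat.sub_add_cancel (Nat.one_le_iff_ne_zero.2 hk)]

/-- Multiplication by the `i`-th coordinate (scaled by `√2`). -/
def position (c : ℕ → ℝ) (i : ι) : End ℝ ((ι → ℕ) → W) := lower c i + raise c i

/-- Differentiation in the `i`-th coordinate (scaled by `√2`). -/
def derivation (c : ℕ → ℝ) (i : ι) : End ℝ ((ι → ℕ) → W) := lower c i - raise c i

theorem commute_position (i j : ι) :
    Commute (position c i : End ℝ ((ι → ℕ) → W)) (position c j) := by
  rcases eq_or_ne i j with rfl | hij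
  · rfl
  exact ((commute_lower i j).add_right (commute_lower_raise hij)).add_left
    ((commute_lower_raise hij.symm).symm.add_right (commute_raise i j))

theorem commute_derivation (i j : ι) :
    Commute (derivation c i : End ℝ ((ι → ℕ) → W)) (derivation c j) := by
  rcases eq_or_ne i j with rfl | hij
  · rfl
  exact ((commute_lower i j).sub_right (commute_lower_raise hij)).sub_left
    ((commute_lower_raise hij.symm).symm.sub_right (commute_raise i j))

theorem commute_derivation_position {i j : ι} (hij : i ≠ j) :
    Commute (derivation c i : End ℝ ((ι → ℕ) → W)) (position c j) :=
  ((commute_lower i j).add_right (commute_lower_raise hij)).sub_left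
    ((commute_lower_raise hij.symm).symm.add_right (commute_raise i j))

theorem derivation_position_commutator_apply (hc : c 0 = 0) (i : ι) (w : (ι → ℕ) → W)
    (k : ι → ℕ) :
    (derivation c i * position c i - position c i * derivation c i : End ℝ ((ι → ℕ) → W)) w k =
      (2 * (c (k i + 1) ^ 2 - c (k i) ^ 2)) • w k := by
  have expand : (derivation c i * position c i - position c i * derivation c i :
      End ℝ ((ι → ℕ) → W)) = (2 : ℝ) • (lower c i * raise c i - raise c i * lower c i) := by
    simp only [two_smul, position, derivation, mul_add, mul_sub, add_mul, sub_mul]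
    abel
  simp [expand, lower_raise_apply, raise_lower_apply hc, mul_smul, sub_smul]

theorem position_sq_sub_derivation_sq_apply (hc : c 0 = 0) (i : ι) (w : (ι → ℕ) → W)
    (k : ι → ℕ) :
    (position c i * position c i - derivation c i * derivation c i : End ℝ ((ι → ℕ) → W)) w k =
      (2 * (c (k i + 1) ^ 2 + c (k i) ^ 2)) • w k := by
  have expand : (position c i * position c i - derivation c i * derivation c i :
      End ℝ ((ι → ℕ) → W)) = (2 : ℝ) • (lower c i * raise c i + raise c i * lower c i) := by
    simp only [two_smul, position, derivation, mul_add, mul_sub, add_mul, sub_mul]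
    abel
  simp [expand, lower_raise_apply, raise_lower_apply hc, mul_smul, add_smul]

theorem lower_eq_zero {i : ι} {w : (ι → ℕ) → W} {k : ι → ℕ} (hw : w (k + Pi.single i 1) = 0) :
    lower c i w k = 0 := by
  rw [lower_apply, hw, smul_zero]

theorem raise_eq_zero (hc : c 0 = 0) {i : ι} {w : (ι → ℕ) → W} {k : ι → ℕ}
    (hw : k i ≠ 0 → w (k - Pi.single i 1) = 0) : raise c i w k = 0 := by
  rcases eq_or_ne (k i) 0 with hk | hk
  · rw [raise_apply, hk, hc, zero_smul]
  · rw [raise_apply, hw hk, smul_zero]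

theorem lower_congr {c' : ℕ → ℝ} {i : ι} {w : (ι → ℕ) → W}
    (h : ∀ k, w k ≠ 0 → c (k i) = c' (k i)) : lower c i w = lower c' i w := by
  ext k
  by_cases hk : w (k + Pi.single i 1) = 0
  · simp [lower_apply, hk]
  · simpa [lower_apply] using congr($(h _ hk) • w (k + Pi.single i 1))

theorem raise_congr {c' : ℕ → ℝ} (hc : c 0 = c' 0) {i : ι} {w : (ι → ℕ) → W}
    (h : ∀ k, w k ≠ 0 → c (k i + 1) = c' (k i + 1)) : raise c i w = raise c' i w := by
  ext k
  rcases eq_or_ne (k i) 0 with hi | hi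
  · simp [raise_apply, hi, hc]
  by_cases hk : w (k - Pi.single i 1) = 0
  · simp [raise_apply, hk]
  · have := h _ hk
    simp only [Pi.sub_apply, Pi.single_eq_same,
      Nat.sub_add_cancel (Nat.one_le_iff_ne_zero.2 hi)] at this
    simp only [raise_apply, this]

end Oscillator

section Degree

variable {ι : Type*} [Fintype ι]

/-- The degree of a multi-index. -/
def degree (k : ι → ℕ) : ℕ := ∑ i, k i

theorem le_degree (k : ι → ℕ) (i : ι) : k i ≤ degree k :=
  Finset.single_le_sum (fun _ _ => Nat.zero_le _) (Finset.mem_univ i)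

theorem finite_setOf_degree_le (d : ℕ) : {k : ι → ℕ | degree k ≤ d}.Finite :=
  (Set.Finite.pi' fun _ => Set.finite_Iic d).subset fun k hk i => (le_degree k i).trans hk

variable [DecidableEq ι]

theorem degree_add_single (k : ι → ℕ) (i : ι) : degree (k + Pi.single i 1) = degree k + 1 := by
  simp [degree, Finset.sum_add_distrib]

theorem degree_sub_single {k : ι → ℕ} {i : ι} (hk : k i ≠ 0) :
    degree (k - Pi.single i 1) + 1 = degree k := by
  rw [← degree_add_single, sub_single_add_single hk]

end Degree

section FormalDirac

open Module

variable {ι : Type*} {W : Type*} [NormedAddCommGroup W] [NormedSpace ℝ W]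

/-- An operator on the coefficients, acting on each coefficient of a formal Hermite expansion. -/
def coeffwise : (W →L[ℝ] W) →ₐ[ℝ] End ℝ ((ι → ℕ) → W) where
  toFun M := (M : W →ₗ[ℝ] W).compLeft (ι → ℕ)
  map_one' := rfl
  map_mul' _ _ := rfl
  map_zero' := rfl
  map_add' _ _ := rfl
  commutes' _ := rfl

theorem coeffwise_apply (M : W →L[ℝ] W) (w : (ι → ℕ) → W) (k : ι → ℕ) :
    coeffwise M w k = M (w k) :=
  rfl

variable [DecidableEq ι] {c : ℕ → ℝ}

theorem commute_coeffwise_lower (M : W →L[ℝ] W) (i : ι) : Commute (coeffwise M) (lower c i) := by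
  ext w k
  simp [coeffwise_apply, lower_apply]

theorem commute_coeffwise_raise (M : W →L[ℝ] W) (i : ι) : Commute (coeffwise M) (raise c i) := by
  ext w k
  simp [coeffwise_apply, raise_apply]

theorem commute_coeffwise_position (M : W →L[ℝ] W) (i : ι) :
    Commute (coeffwise M) (position c i) :=
  (commute_coeffwise_lower M i).add_right (commute_coeffwise_raise M i)

theorem commute_coeffwise_derivation (M : W →L[ℝ] W) (i : ι) :
    Commute (coeffwise M) (derivation c i) :=
  (commute_coeffwise_lower M i).sub_right (commute_coeffwise_raise M i)

variable [Fintype ι] {A G : ι → W →L[ℝ] W}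

/-- The Dirac-type operator `∑ i, G i ∂ᵢ + A i xᵢ` on formal Hermite expansions, built from the
ladder operators with matrix entries `c`. -/
def dirac (c : ℕ → ℝ) (A G : ι → W →L[ℝ] W) : End ℝ ((ι → ℕ) → W) :=
  ∑ i, (coeffwise (G i) * derivation c i + coeffwise (A i) * position c i)

theorem dirac_apply (w : (ι → ℕ) → W) (k : ι → ℕ) :
    dirac c A G w k = ∑ i, ((A i + G i) (lower c i w k) + (A i - G i) (raise c i w k)) := by
  simp only [dirac, LinearMap.sum_apply, Finset.sum_apply]
  refine Finset.sum_congr rfl fun i _ => ?_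
  simp only [derivation, position, LinearMap.add_apply, End.mul_apply, LinearMap.sub_apply,
    map_sub, map_add, Pi.add_apply, Pi.sub_apply, coeffwise_apply, _root_.add_apply,
    _root_.sub_apply]
  abel

theorem dirac_congr {c' : ℕ → ℝ} (hc : c 0 = c' 0) {w : (ι → ℕ) → W}
    (h : ∀ i k, w k ≠ 0 → c (k i) = c' (k i) ∧ c (k i + 1) = c' (k i + 1)) :
    dirac c A G w = dirac c' A G w := by
  ext k
  simp only [dirac_apply, lower_congr fun k hk => (h _ k hk).1,
    raise_congr hc fun k hk => (h _ k hk).2]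

theorem dirac_smul_add_smul (r s : ℝ) (A B G : ι → W →L[ℝ] W) :
    dirac c (r • A + s • B) G = dirac c 0 G + r • dirac c A 0 + s • dirac c B 0 := by
  simp only [dirac, Pi.add_apply, Pi.smul_apply, map_add, map_smul, Pi.zero_apply, map_zero,
    zero_mul, zero_add, add_zero, add_mul, smul_mul_assoc, Finset.smul_sum,
    ← Finset.sum_add_distrib, add_assoc]

theorem dirac_mul_coeffwise {R : W →L[ℝ] W} {ε : ℝ} (hA : ∀ i, A i * R = ε • (R * A i))
    (hG : ∀ i, G i * R = ε • (R * G i)) :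
    dirac c A G * coeffwise R = ε • (coeffwise R * dirac c A G) := by
  simp only [dirac, Finset.sum_mul, Finset.mul_sum, Finset.smul_sum]
  refine Finset.sum_congr rfl fun i _ => ?_
  rw [add_mul, mul_assoc, mul_assoc, ← (commute_coeffwise_derivation R i).eq,
    ← (commute_coeffwise_position R i).eq, ← mul_assoc, ← mul_assoc, ← map_mul, ← map_mul, hA, hG,
    map_smul, map_smul, map_mul, map_mul, mul_add, smul_add, smul_mul_assoc, smul_mul_assoc,
    mul_assoc, mul_assoc]

theorem dirac_sq (hA : ∀ i j, AntiCommute (G i) (A j)) (hG : IsClifford (fun _ => -1) G) :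
    dirac c A G * dirac c A G =
      (∑ i, coeffwise (A i) * position c i) * (∑ i, coeffwise (A i) * position c i)
        - ∑ i, derivation c i * derivation c i
        + ∑ i, coeffwise (G i) * coeffwise (A i) *
          (derivation c i * position c i - position c i * derivation c i) :=
  (hG.map coeffwise.toRingHom).dirac_mul_self (fun i j => (hA i j).map coeffwise.toRingHom)
    (fun _ _ => commute_coeffwise_derivation _ _) (fun _ _ => commute_coeffwise_position _ _)
    (fun _ _ => commute_coeffwise_derivation _ _) commute_derivation
    fun _ _ hij => commute_derivation_position hij

theorem dirac_apply_eq_zero_of_parity (hc : c 0 = 0) {w : (ι → ℕ) → W} {k : ι → ℕ}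
    (hw : ∀ l, (Even (degree l) ↔ ¬ Even (degree k)) → w l = 0) : dirac c A G w k = 0 := by
  rw [dirac_apply]
  refine Finset.sum_eq_zero fun i _ => ?_
  have hlower : lower c i w k = 0 :=
    lower_eq_zero (hw _ (by rw [degree_add_single, Nat.even_add_one]))
  have hraise : raise c i w k = 0 :=
    raise_eq_zero hc fun hk => hw _ (by rw [← degree_sub_single hk, Nat.even_add_one, not_not])
  rw [hlower, hraise, map_zero, map_zero, add_zero]

end FormalDirac

section FockSpace

open Module Function
open scoped InnerProductSpace

/-- Square-summable Hermite expansions with coefficients in `W`, a model of `L²(ℝ^ι; W)`. -/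
abbrev FockSpace (ι W : Type*) [NormedAddCommGroup W] := lp (fun _ : ι → ℕ => W) 2

variable {ι W : Type*} [NormedAddCommGroup W]

theorem sum_norm_sq_le_norm_sq (u : FockSpace ι W) (s : Finset (ι → ℕ)) :
    ∑ k ∈ s, ‖u k‖ ^ 2 ≤ ‖u‖ ^ 2 := by
  simpa using lp.sum_rpow_le_norm_rpow (by simp) u s

variable [InnerProductSpace ℝ W]

theorem sum_norm_sq_comp_le {M : (ι → ℕ) → W →L[ℝ] W} {σ : (ι → ℕ) → ι → ℕ} (hσ : Injective σ)
    {C : ℝ} (hM : ∀ k, ‖M k‖ ≤ C) (u : FockSpace ι W) (s : Finset (ι → ℕ)) :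
    ∑ k ∈ s, ‖M k (u (σ k))‖ ^ 2 ≤ (C * ‖u‖) ^ 2 :=
  calc ∑ k ∈ s, ‖M k (u (σ k))‖ ^ 2
    _ ≤ ∑ k ∈ s, (C * ‖u (σ k)‖) ^ 2 := by
      gcongr with k
      exact (M k).le_of_opNorm_le (hM k) _
    _ = C ^ 2 * ∑ k ∈ s.map ⟨σ, hσ⟩, ‖u k‖ ^ 2 := by simp [mul_pow, Finset.mul_sum]
    _ ≤ (C * ‖u‖) ^ 2 := by
      rw [mul_pow]
      gcongr
      exact sum_norm_sq_le_norm_sq u _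

/-- The operator `u ↦ (k ↦ M k (u (σ k)))` for an injective reindexing `σ` and a bounded family of
coefficient operators `M`. -/
noncomputable def weightedComp (M : (ι → ℕ) → W →L[ℝ] W) (σ : (ι → ℕ) → ι → ℕ)
    (hσ : Injective σ) (C : ℝ) (hM : ∀ k, ‖M k‖ ≤ C) : FockSpace ι W →L[ℝ] FockSpace ι W :=
  LinearMap.mkContinuous
    { toFun u := ⟨fun k => M k (u (σ k)), memℓp_gen' (C := (C * ‖u‖) ^ 2) fun s => by
        simpa using sum_norm_sq_comp_le hσ hM u s⟩
      map_add' u v := lp.ext (funext fun k => (M k).map_add _ _)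
      map_smul' r u := lp.ext (funext fun k => (M k).map_smul r _) }
    C fun u => lp.norm_le_of_forall_sum_le (by simp)
      (mul_nonneg ((norm_nonneg _).trans (hM 0)) (norm_nonneg u)) fun s => by
        simpa using sum_norm_sq_comp_le hσ hM u s

theorem weightedComp_apply {M : (ι → ℕ) → W →L[ℝ] W} {σ : (ι → ℕ) → ι → ℕ} (hσ : Injective σ)
    {C : ℝ} (hM : ∀ k, ‖M k‖ ≤ C) (u : FockSpace ι W) (k : ι → ℕ) :
    weightedComp M σ hσ C hM u k = M k (u (σ k)) :=
  rfl

theorem norm_weightedComp_le {M : (ι → ℕ) → W →L[ℝ] W} {σ : (ι → ℕ) → ι → ℕ}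
    (hσ : Injective σ) {C : ℝ} (hM : ∀ k, ‖M k‖ ≤ C) : ‖weightedComp M σ hσ C hM‖ ≤ C := by
  unfold weightedComp
  exact LinearMap.mkContinuous_norm_le _ ((norm_nonneg _).trans (hM 0)) _

/-- The coefficientwise action of an operator, as a representation on the Fock space. -/
noncomputable def fibre (ι W : Type*) [NormedAddCommGroup W] [InnerProductSpace ℝ W]
    [CompleteSpace W] :
    (W →L[ℝ] W) →⋆ₐ[ℝ] (FockSpace ι W →L[ℝ] FockSpace ι W) where
  toFun M := weightedComp (fun _ => M) id injective_id ‖M‖ fun _ => le_rfl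
  map_one' := rfl
  map_mul' _ _ := rfl
  map_zero' := rfl
  map_add' _ _ := rfl
  commutes' _ := rfl
  map_star' M := by
    refine (ContinuousLinearMap.eq_adjoint_iff _ _).2 fun u v => ?_
    simp only [lp.inner_eq_tsum, weightedComp_apply, id]
    exact tsum_congr fun k => ContinuousLinearMap.adjoint_inner_left M _ _

/-- `T` is a bounded operator acting on square-summable expansions as the formal operator `P`. -/
def Realizes (T : FockSpace ι W →L[ℝ] FockSpace ι W) (P : End ℝ ((ι → ℕ) → W)) : Prop :=
  ∀ u k, T u k = P u k

namespace Realizes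

variable {S T : FockSpace ι W →L[ℝ] FockSpace ι W} {P Q : End ℝ ((ι → ℕ) → W)}

theorem add (hS : Realizes S P) (hT : Realizes T Q) : Realizes (S + T) (P + Q) := fun u k =>
  congr($(hS u k) + $(hT u k))

theorem sub (hS : Realizes S P) (hT : Realizes T Q) : Realizes (S - T) (P - Q) := fun u k =>
  congr($(hS u k) - $(hT u k))

theorem smul (r : ℝ) (hT : Realizes T P) : Realizes (r • T) (r • P) := fun u k =>
  congr(r • $(hT u k))

theorem mul (hS : Realizes S P) (hT : Realizes T Q) : Realizes (S * T) (P * Q) := fun u k =>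
  (hS (T u) k).trans congr(P $(funext (hT u)) k)

theorem sum {κ : Type*} {s : Finset κ} {T : κ → FockSpace ι W →L[ℝ] FockSpace ι W}
    {P : κ → End ℝ ((ι → ℕ) → W)} (h : ∀ i ∈ s, Realizes (T i) (P i)) :
    Realizes (∑ i ∈ s, T i) (∑ i ∈ s, P i) :=
  fun u k => by
    simp only [_root_.sum_apply, LinearMap.sum_apply, Finset.sum_apply,
      lp.coeFn_sum]
    exact Finset.sum_congr rfl fun i hi => h i hi u k

theorem unique (hS : Realizes S P) (hT : Realizes T P) : S = T := by
  ext1 u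
  exact lp.ext (funext fun k => (hS u k).trans (hT u k).symm)

theorem commute (hS : Realizes S P) (hT : Realizes T Q) (h : Commute P Q) : Commute S T :=
  (hS.mul hT).unique (h.eq ▸ hT.mul hS)

end Realizes

theorem fibre_realizes [CompleteSpace W] (M : W →L[ℝ] W) :
    Realizes (fibre ι W M) (coeffwise M) :=
  fun _ _ => rfl

theorem norm_fibre_le [CompleteSpace W] (M : W →L[ℝ] W) : ‖fibre ι W M‖ ≤ ‖M‖ :=
  norm_weightedComp_le injective_id fun _ => le_rfl

variable [DecidableEq ι]

/-- The lowering operator of the `i`-th coordinate with bounded weights `a`. -/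
noncomputable def weightedShift (i : ι) (a : (ι → ℕ) → ℝ) (C : ℝ) (ha : ∀ k, |a k| ≤ C) :
    FockSpace ι W →L[ℝ] FockSpace ι W :=
  weightedComp (fun k => a k • 1) (· + Pi.single i 1) (add_left_injective _) C fun k => by
    rw [norm_smul]
    exact (mul_le_of_le_one_right (abs_nonneg _) ContinuousLinearMap.norm_id_le).trans (ha k)

variable {i : ι} {a : (ι → ℕ) → ℝ} {C : ℝ} (ha : ∀ k, |a k| ≤ C)

theorem weightedShift_apply (u : FockSpace ι W) (k : ι → ℕ) :
    weightedShift i a C ha u k = a k • u (k + Pi.single i 1) :=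
  rfl

theorem weightedShift_single [DecidableEq (ι → ℕ)] (k : ι → ℕ) (x : W) :
    weightedShift i a C ha (lp.single 2 (k + Pi.single i 1) x) = lp.single 2 k (a k • x) := by
  ext l
  rcases eq_or_ne l k with rfl | hl
  · simp [weightedShift_apply]
  · simp [weightedShift_apply, hl]

theorem weightedShift_single_of_eq_zero [DecidableEq (ι → ℕ)] {k : ι → ℕ} (hk : k i = 0) (x : W) :
    weightedShift i a C ha (lp.single 2 k x) = 0 := by
  ext l
  have hl : l + Pi.single i 1 ≠ k := fun h => by simp [← h] at hk
  simp [weightedShift_apply, hl]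

variable [CompleteSpace W]

theorem star_weightedShift_apply (u : FockSpace ι W) (k : ι → ℕ) :
    (star (weightedShift i a C ha) u : FockSpace ι W) k =
      if k i = 0 then 0 else a (k - Pi.single i 1) • u (k - Pi.single i 1) := by
  classical
  refine ext_inner_left ℝ fun x => ?_
  rw [← lp.inner_single_left (𝕜 := ℝ) (G := fun _ => W), ContinuousLinearMap.star_eq_adjoint,
    ContinuousLinearMap.adjoint_inner_right]
  split_ifs with hk
  · rw [weightedShift_single_of_eq_zero ha hk, inner_zero_left, inner_zero_right]
  · conv_lhs => rw [← sub_single_add_single hk]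
    rw [weightedShift_single, lp.inner_single_left, real_inner_smul_left, real_inner_smul_right]

end FockSpace

section NormalizedDirac

open Module
open scoped InnerProductSpace

variable {ι W : Type*} [Fintype ι] [NormedAddCommGroup W] [InnerProductSpace ℝ W]

/-- Division of the `k`-th coefficient by `√(degree k + 1)`, which compensates the growth of the
ladder operators. -/
noncomputable def invSqrtDegree : End ℝ ((ι → ℕ) → W) where
  toFun w k := (√(degree k + 1))⁻¹ • w k
  map_add' w w' := by ext; simp
  map_smul' r w := by ext; simp [smul_comm r]

theorem invSqrtDegree_apply (w : (ι → ℕ) → W) (k : ι → ℕ) :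
    invSqrtDegree w k = (√(degree k + 1))⁻¹ • w k :=
  rfl

theorem cast_add_one_le_degree_add_one (k : ι → ℕ) (i : ι) : (k i + 1 : ℝ) ≤ degree k + 1 := by
  gcongr
  exact le_degree k i

theorem abs_sqrt_div_sqrt_le_one {x y : ℝ} (h : x ≤ y) : |√x / √y| ≤ 1 := by
  rw [abs_of_nonneg (by positivity)]
  exact div_le_one_of_le₀ (Real.sqrt_le_sqrt h) (Real.sqrt_nonneg y)

variable [DecidableEq ι]

/-- The operator `∑ i, G i ∂ᵢ + A i xᵢ` (scaled by `√2`) on formal Hermite expansions. -/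
noncomputable abbrev oscillatorDirac (A G : ι → W →L[ℝ] W) : End ℝ ((ι → ℕ) → W) :=
  dirac (fun j => √j) A G

theorem oscillatorDirac_eq_sum (A G : ι → W →L[ℝ] W) :
    oscillatorDirac A G = ∑ i, (coeffwise (A i + G i) * lower (fun j => √j) i +
      coeffwise (A i - G i) * raise (fun j => √j) i) := by
  ext w k
  simp [dirac_apply, coeffwise_apply]

/-- The lowering operator of the oscillator precomposed with `invSqrtDegree`, as a bounded
operator. -/
noncomputable def normalizedLower (i : ι) : FockSpace ι W →L[ℝ] FockSpace ι W :=
  weightedShift i (fun k => √(k i + 1) / √(degree k + 1 + 1)) 1 fun k =>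
    abs_sqrt_div_sqrt_le_one ((cast_add_one_le_degree_add_one k i).trans (by simp))

theorem normalizedLower_realizes (i : ι) :
    Realizes (normalizedLower i : FockSpace ι W →L[ℝ] FockSpace ι W)
      (lower (fun j => √j) i * invSqrtDegree) := fun u k => by
  simp [normalizedLower, weightedShift_apply, lower_apply, invSqrtDegree_apply, degree_add_single,
    smul_smul, div_eq_mul_inv]

variable [CompleteSpace W]

theorem star_normalizedLower_realizes (i : ι) :
    Realizes (star (normalizedLower i) : FockSpace ι W →L[ℝ] FockSpace ι W)
      (invSqrtDegree * raise (fun j => √j) i) := fun u k => by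
  rcases eq_or_ne (k i) 0 with hk | hk
  · simp [normalizedLower, star_weightedShift_apply, raise_apply, invSqrtDegree_apply, hk]
  · have hi : ((k i - 1 : ℕ) : ℝ) + 1 = k i := mod_cast Nat.sub_one_add_one hk
    have hd : (degree (k - Pi.single i 1) : ℝ) + 1 = degree k := mod_cast degree_sub_single hk
    simp [normalizedLower, star_weightedShift_apply, raise_apply, invSqrtDegree_apply, hk, hi, hd,
      smul_smul, div_eq_inv_mul]

/-- The raising operator of the oscillator precomposed with `invSqrtDegree`, as a bounded
operator. -/
noncomputable def normalizedRaise (i : ι) : FockSpace ι W →L[ℝ] FockSpace ι W :=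
  star (weightedShift i (fun k => √(k i + 1) / √(degree k + 1)) 1 fun k =>
    abs_sqrt_div_sqrt_le_one (cast_add_one_le_degree_add_one k i))

theorem normalizedRaise_realizes (i : ι) :
    Realizes (normalizedRaise i : FockSpace ι W →L[ℝ] FockSpace ι W)
      (raise (fun j => √j) i * invSqrtDegree) := fun u k => by
  rcases eq_or_ne (k i) 0 with hk | hk
  · simp [normalizedRaise, star_weightedShift_apply, raise_apply, hk]
  · have hi : ((k i - 1 : ℕ) : ℝ) + 1 = k i := mod_cast Nat.sub_one_add_one hk
    simp [normalizedRaise, star_weightedShift_apply, raise_apply, invSqrtDegree_apply, hk, hi,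
      smul_smul, div_eq_mul_inv]

theorem star_normalizedRaise_realizes (i : ι) :
    Realizes (star (normalizedRaise i) : FockSpace ι W →L[ℝ] FockSpace ι W)
      (invSqrtDegree * lower (fun j => √j) i) := fun u k => by
  simp [normalizedRaise, weightedShift_apply, lower_apply, invSqrtDegree_apply, smul_smul,
    div_eq_inv_mul]

/-- `oscillatorDirac A G` precomposed with `invSqrtDegree`, as a bounded operator. -/
noncomputable def normalizedDirac (A G : ι → W →L[ℝ] W) : FockSpace ι W →L[ℝ] FockSpace ι W :=
  ∑ i, (fibre ι W (A i + G i) * normalizedLower i + fibre ι W (A i - G i) * normalizedRaise i)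

theorem normalizedDirac_realizes (A G : ι → W →L[ℝ] W) :
    Realizes (normalizedDirac A G) (oscillatorDirac A G * invSqrtDegree) := by
  simp only [oscillatorDirac_eq_sum, Finset.sum_mul, add_mul, mul_assoc]
  exact .sum fun i _ => ((fibre_realizes _).mul (normalizedLower_realizes i)).add
    ((fibre_realizes _).mul (normalizedRaise_realizes i))

/-- The hypotheses on the coefficients of `∑ i, G i ∂ᵢ + A i xᵢ` that make it formally self-adjoint
and its square an elliptic operator of oscillator type. -/
structure IsDiracSymbol (A G : ι → W →L[ℝ] W) : Prop where
  isSelfAdjoint : ∀ i, IsSelfAdjoint (A i)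
  isStarClifford : IsStarClifford (fun _ => -1) G
  antiCommute : ∀ i j, AntiCommute (G i) (A j)

theorem star_normalizedDirac_realizes {A G : ι → W →L[ℝ] W} (h : IsDiracSymbol A G) :
    Realizes (star (normalizedDirac A G)) (invSqrtDegree * oscillatorDirac A G) := by
  have star_G (i) : star (G i) = -G i := by simpa using h.isStarClifford.star_eq i
  have star_eq : star (normalizedDirac A G) = ∑ i, (star (normalizedRaise (W := W) i) *
      fibre ι W (A i + G i) + star (normalizedLower (W := W) i) * fibre ι W (A i - G i)) := by
    simp only [normalizedDirac, star_sum, star_add, star_mul, ← map_star, star_sub, star_G,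
      (h.isSelfAdjoint _).star_eq, sub_neg_eq_add, ← sub_eq_add_neg]
    exact Finset.sum_congr rfl fun i _ => add_comm _ _
  simp only [star_eq, oscillatorDirac_eq_sum, Finset.mul_sum, mul_add,
    (commute_coeffwise_lower _ _).eq, (commute_coeffwise_raise _ _).eq, ← mul_assoc]
  exact .sum fun i _ => ((star_normalizedRaise_realizes i).mul (fibre_realizes _)).add
    ((star_normalizedLower_realizes i).mul (fibre_realizes _))

theorem normalizedDirac_smul_add_smul (r s : ℝ) (A B G : ι → W →L[ℝ] W) :
    normalizedDirac (r • A + s • B) G =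
      normalizedDirac 0 G + r • normalizedDirac A 0 + s • normalizedDirac B 0 := by
  refine (normalizedDirac_realizes _ _).unique ?_
  rw [oscillatorDirac, dirac_smul_add_smul, add_mul, add_mul, smul_mul_assoc, smul_mul_assoc]
  exact ((normalizedDirac_realizes 0 G).add ((normalizedDirac_realizes A 0).smul r)).add
    ((normalizedDirac_realizes B 0).smul s)

end NormalizedDirac

section SupportedOn

open Module

variable {ι W : Type*} [NormedAddCommGroup W] [InnerProductSpace ℝ W]

/-- The expansions all of whose nonzero coefficients have index in `s`. -/
def supportedOn (ι W : Type*) [NormedAddCommGroup W] [InnerProductSpace ℝ W] (s : Set (ι → ℕ)) :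
    Submodule ℝ (FockSpace ι W) where
  carrier := {u | ∀ k ∉ s, u k = 0}
  zero_mem' := by simp
  add_mem' hu hv k hk := by simp [hu k hk, hv k hk]
  smul_mem' r u hu k hk := by simp [hu k hk]

theorem mem_supportedOn {s : Set (ι → ℕ)} {u : FockSpace ι W} :
    u ∈ supportedOn ι W s ↔ ∀ k ∉ s, u k = 0 :=
  Iff.rfl

theorem mem_of_mem_supportedOn {s : Set (ι → ℕ)} {u : FockSpace ι W} (hu : u ∈ supportedOn ι W s)
    {k : ι → ℕ} (hk : u k ≠ 0) : k ∈ s :=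
  not_imp_comm.1 (hu k) hk

theorem isClosed_supportedOn (s : Set (ι → ℕ)) :
    IsClosed (supportedOn ι W s : Set (FockSpace ι W)) := by
  have : (supportedOn ι W s : Set (FockSpace ι W)) = ⋂ k ∈ sᶜ, {u | lp.evalCLM ℝ _ 2 k u = 0} := by
    ext u
    simp [mem_supportedOn, lp.evalCLM]
  rw [this]
  exact isClosed_biInter fun k _ => isClosed_eq (ContinuousLinearMap.continuous _) continuous_const

theorem finiteDimensional_supportedOn [FiniteDimensional ℝ W] {s : Set (ι → ℕ)} (hs : s.Finite) :
    FiniteDimensional ℝ (supportedOn ι W s) := by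
  have := hs.to_subtype
  let restrict : supportedOn ι W s →ₗ[ℝ] s → W :=
    { toFun u k := (u : FockSpace ι W) k
      map_add' _ _ := rfl
      map_smul' _ _ := rfl }
  refine .of_injective restrict fun u v huv => Subtype.ext (lp.ext (funext fun k => ?_))
  by_cases hk : k ∈ s
  · exact congrFun huv ⟨k, hk⟩
  · rw [u.2 k hk, v.2 k hk]

end SupportedOn

section CoerciveSymbol

variable {ι W : Type*} [NormedAddCommGroup W] [InnerProductSpace ℝ W]

theorem hasSum_norm_sq (u : FockSpace ι W) : HasSum (fun k => ‖u k‖ ^ 2) (‖u‖ ^ 2) := by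
  simpa using lp.hasSum_inner (𝕜 := ℝ) u u

/-- The lower bound `κ |x|² ≤ (∑ i, x i • A i)²` on the symbol of a family of operators. -/
def IsCoerciveSymbol [Fintype ι] (κ : ℝ) (A : ι → W →L[ℝ] W) : Prop :=
  ∀ (x : ι → ℝ) w, κ * (∑ i, x i ^ 2) * ‖w‖ ^ 2 ≤ ‖∑ i, x i • A i w‖ ^ 2

theorem IsCoerciveSymbol.map_fibre [Fintype ι] [CompleteSpace W] {A : ι → W →L[ℝ] W} {κ : ℝ}
    (hA : IsCoerciveSymbol κ A) : IsCoerciveSymbol κ fun i => fibre ι W (A i) := by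
  intro x u
  have coeff (k) : (∑ i, x i • fibre ι W (A i) u : FockSpace ι W) k = ∑ i, x i • A i (u k) := by
    rw [lp.coeFn_sum]
    exact Finset.sum_apply _ _ _
  refine hasSum_le (fun k => ?_) ((hasSum_norm_sq u).mul_left _) (hasSum_norm_sq _)
  rw [coeff]
  exact hA x (u k)

end CoerciveSymbol

section TruncatedOscillator

open Module
open scoped InnerProductSpace

/-- The matrix entries `√j` of the ladder operators, cut off at level `L`. -/
noncomputable def truncSqrt (L j : ℕ) : ℝ := if j < L then √j else 0

theorem truncSqrt_of_lt {L j : ℕ} (h : j < L) : truncSqrt L j = √j := if_pos h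

theorem truncSqrt_of_le {L j : ℕ} (h : L ≤ j) : truncSqrt L j = 0 := if_neg h.not_gt

theorem truncSqrt_zero (L : ℕ) : truncSqrt L 0 = 0 := by simp [truncSqrt]

theorem abs_truncSqrt_le (L j : ℕ) : |truncSqrt L j| ≤ √L := by
  rw [truncSqrt]
  split_ifs with h
  · rw [abs_of_nonneg (Real.sqrt_nonneg _)]
    gcongr
  · simp

variable {ι W : Type*} [DecidableEq ι] [NormedAddCommGroup W] [InnerProductSpace ℝ W]

/-- The lowering operator with the truncated matrix entries, which is bounded. -/
noncomputable def truncLower (W : Type*) [NormedAddCommGroup W] [InnerProductSpace ℝ W] (L : ℕ)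
    (i : ι) : FockSpace ι W →L[ℝ] FockSpace ι W :=
  weightedShift i (fun k => truncSqrt L (k i + 1)) √L fun _ => abs_truncSqrt_le _ _

variable (W) in
theorem truncLower_realizes (L : ℕ) (i : ι) :
    Realizes (truncLower W L i) (lower (truncSqrt L) i) :=
  fun _ _ => rfl

variable [CompleteSpace W]

variable (W) in
theorem star_truncLower_realizes (L : ℕ) (i : ι) :
    Realizes (star (truncLower W L i)) (raise (truncSqrt L) i) := fun u k => by
  rcases eq_or_ne (k i) 0 with hk | hk
  · simp [truncLower, star_weightedShift_apply, raise_apply, truncSqrt_zero, hk]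
  · simp [truncLower, star_weightedShift_apply, raise_apply, hk, Nat.sub_one_add_one hk]

/-- The truncated position operator. -/
noncomputable def truncPosition (W : Type*) [NormedAddCommGroup W] [InnerProductSpace ℝ W]
    [CompleteSpace W] (L : ℕ) (i : ι) : FockSpace ι W →L[ℝ] FockSpace ι W :=
  truncLower W L i + star (truncLower W L i)

/-- The truncated derivation operator. -/
noncomputable def truncDerivation (W : Type*) [NormedAddCommGroup W] [InnerProductSpace ℝ W]
    [CompleteSpace W] (L : ℕ) (i : ι) : FockSpace ι W →L[ℝ] FockSpace ι W :=
  truncLower W L i - star (truncLower W L i)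

theorem truncPosition_realizes (L : ℕ) (i : ι) :
    Realizes (truncPosition W L i) (position (truncSqrt L) i) :=
  (truncLower_realizes W L i).add (star_truncLower_realizes W L i)

theorem truncDerivation_realizes (L : ℕ) (i : ι) :
    Realizes (truncDerivation W L i) (derivation (truncSqrt L) i) :=
  (truncLower_realizes W L i).sub (star_truncLower_realizes W L i)

theorem isSelfAdjoint_truncPosition (L : ℕ) (i : ι) : IsSelfAdjoint (truncPosition W L i) :=
  .add_star_self _

theorem star_truncDerivation (L : ℕ) (i : ι) :
    star (truncDerivation W L i) = -truncDerivation W L i := by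
  simp [truncDerivation]

theorem truncPosition_mem_supportedOn_box {L : ℕ} {u : FockSpace ι W}
    (hu : u ∈ supportedOn ι W {k | ∀ i, k i < L}) (i : ι) :
    truncPosition W L i u ∈ supportedOn ι W {k | ∀ i, k i < L} := by
  intro k hk
  obtain ⟨j, hj⟩ : ∃ j, L ≤ k j := by simpa using hk
  rw [truncPosition_realizes, position, LinearMap.add_apply, Pi.add_apply, lower_apply,
    raise_apply]
  rcases eq_or_ne j i with rfl | hji
  · rw [truncSqrt_of_le hj, truncSqrt_of_le (hj.trans (Nat.le_succ _)), zero_smul, zero_smul,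
      add_zero]
  · have vanishes {l : ι → ℕ} (hl : l j = k j) : u l = 0 :=
      hu l fun h => (h j).not_ge (hl ▸ hj)
    rw [vanishes (by simp [hji]), vanishes (by simp [hji]), smul_zero, smul_zero, add_zero]

variable [Fintype ι] {A G : ι → W →L[ℝ] W} {κ : ℝ}

theorem IsCoerciveSymbol.sum_truncPosition_le [FiniteDimensional ℝ W] (hA : IsCoerciveSymbol κ A)
    {L : ℕ} {v : FockSpace ι W} (hv : v ∈ supportedOn ι W {k | ∀ i, k i < L}) :
    κ * ∑ i, ‖truncPosition W L i v‖ ^ 2 ≤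
      ‖(∑ i, fibre ι W (A i) * truncPosition W L i) v‖ ^ 2 := by
  have : FiniteDimensional ℝ (supportedOn ι W {k | ∀ i, k i < L}) :=
    finiteDimensional_supportedOn (Set.Finite.pi' fun _ => Set.finite_Iio L)
  have hX (i : ι) : (truncPosition W L i).toLinearMap.IsSymmetric :=
    (isSelfAdjoint_truncPosition L i).isSymmetric
  have hcomm (i j : ι) : Commute (truncPosition W L i) (truncPosition W L j) :=
    (truncPosition_realizes L i).commute (truncPosition_realizes L j) (commute_position i j)
  have hAX (i j : ι) : Commute (fibre ι W (A i)) (truncPosition W L j) :=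
    (fibre_realizes (A i)).commute (truncPosition_realizes L j) (commute_coeffwise_position _ j)
  let toEnd : (FockSpace ι W →L[ℝ] FockSpace ι W) →+* End ℝ (FockSpace ι W) :=
    ContinuousLinearMap.toLinearMapRingHom
  rw [_root_.sum_apply]
  exact coercive_sum_mul_of_commute hX (fun i j => (hAX i j).map toEnd) hA.map_fibre
    (mem_iSup_iInf_eigenspace_of_commute hX (fun i j _ => (hcomm i j).map toEnd)
      (fun i u hu => truncPosition_mem_supportedOn_box hu i) hv)

end TruncatedOscillator

section EnergyEstimate

open Module
open scoped InnerProductSpace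

theorem truncSqrt_sq_of_lt {L j : ℕ} (hj : j < L) : truncSqrt L j ^ 2 = j := by
  rw [truncSqrt_of_lt hj, Real.sq_sqrt j.cast_nonneg]

theorem norm_sq_apply_eq_inner_star_mul_self {E : Type*} [NormedAddCommGroup E]
    [InnerProductSpace ℝ E] [CompleteSpace E] (T : E →L[ℝ] E) (v : E) :
    ‖T v‖ ^ 2 = ⟪v, (star T * T) v⟫_ℝ :=
  T.apply_norm_sq_eq_inner_adjoint_right v

variable {ι W : Type*} [DecidableEq ι] [NormedAddCommGroup W] [InnerProductSpace ℝ W]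
  [CompleteSpace W] {L : ℕ}

theorem commute_fibre_truncPosition (M : W →L[ℝ] W) (L : ℕ) (i : ι) :
    Commute (fibre ι W M) (truncPosition W L i) :=
  (fibre_realizes M).commute (truncPosition_realizes L i) (commute_coeffwise_position M i)

theorem commute_fibre_truncDerivation (M : W →L[ℝ] W) (L : ℕ) (i : ι) :
    Commute (fibre ι W M) (truncDerivation W L i) :=
  (fibre_realizes M).commute (truncDerivation_realizes L i) (commute_coeffwise_derivation M i)

theorem isSelfAdjoint_fibre_mul_truncPosition {M : W →L[ℝ] W} (hM : IsSelfAdjoint M) (i : ι) :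
    IsSelfAdjoint (fibre ι W M * truncPosition W L i) :=
  ((hM.map (fibre ι W)).commute_iff (isSelfAdjoint_truncPosition L i)).1
    (commute_fibre_truncPosition M L i)

theorem truncDerivation_truncPosition_commutator {v : FockSpace ι W}
    (hv : v ∈ supportedOn ι W {k | ∀ i, k i + 1 < L}) (i : ι) :
    (truncDerivation W L i * truncPosition W L i
      - truncPosition W L i * truncDerivation W L i) v = (2 : ℝ) • v := by
  have hd := truncDerivation_realizes (W := W) L i
  have hx := truncPosition_realizes (W := W) L i
  refine lp.ext (funext fun k => ?_)
  rw [((hd.mul hx).sub (hx.mul hd)) v k,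
    derivation_position_commutator_apply (truncSqrt_zero L), lp.coeFn_smul, Pi.smul_apply]
  by_cases hk : v k = 0
  · rw [hk, smul_zero, smul_zero]
  · have hki := mem_of_mem_supportedOn hv hk i
    rw [truncSqrt_sq_of_lt hki, truncSqrt_sq_of_lt (Nat.lt_of_succ_lt hki)]
    push_cast
    ring_nf

variable [Fintype ι] {A G : ι → W →L[ℝ] W}

/-- The bounded operator obtained from `∑ i, G i ∂ᵢ + A i xᵢ` by truncating the ladder operators at
level `L`. -/
noncomputable def truncDirac (L : ℕ) (A G : ι → W →L[ℝ] W) : FockSpace ι W →L[ℝ] FockSpace ι W :=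
  ∑ i, (fibre ι W (G i) * truncDerivation W L i + fibre ι W (A i) * truncPosition W L i)

theorem truncDirac_realizes (L : ℕ) (A G : ι → W →L[ℝ] W) :
    Realizes (truncDirac L A G) (dirac (truncSqrt L) A G) :=
  .sum fun i _ => ((fibre_realizes _).mul (truncDerivation_realizes L i)).add
    ((fibre_realizes _).mul (truncPosition_realizes L i))

theorem isSelfAdjoint_truncDirac (h : IsDiracSymbol A G) (L : ℕ) :
    IsSelfAdjoint (truncDirac L A G) := by
  refine isSelfAdjoint_sum _ fun i _ => .add ?_
    (isSelfAdjoint_fibre_mul_truncPosition (h.isSelfAdjoint i) i)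
  have star_G : star (G i) = -G i := by simpa using h.isStarClifford.star_eq i
  rw [IsSelfAdjoint, star_mul, ← map_star, star_G, star_truncDerivation, map_neg, neg_mul_neg,
    (commute_fibre_truncDerivation (G i) L i).eq]

theorem star_truncDirac_mul_self (h : IsDiracSymbol A G) (L : ℕ) :
    star (truncDirac L A G) * truncDirac L A G =
      star (∑ i, fibre ι W (A i) * truncPosition W L i) *
          (∑ i, fibre ι W (A i) * truncPosition W L i)
        + ∑ i, star (truncDerivation W L i) * truncDerivation W L i
        + ∑ i, fibre ι W (G i) * fibre ι W (A i) *
          (truncDerivation W L i * truncPosition W L i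
            - truncPosition W L i * truncDerivation W L i) := by
  have hQ : IsSelfAdjoint (∑ i, fibre ι W (A i) * truncPosition W L i) :=
    isSelfAdjoint_sum _ fun i _ => isSelfAdjoint_fibre_mul_truncPosition (h.isSelfAdjoint i) i
  have hQ' : Realizes (∑ i, fibre ι W (A i) * truncPosition W L i)
      (∑ i, coeffwise (A i) * position (truncSqrt L) i) :=
    .sum fun i _ => (fibre_realizes _).mul (truncPosition_realizes L i)
  have hd := truncDerivation_realizes (W := W) (ι := ι) L
  have hx := truncPosition_realizes (W := W) (ι := ι) L
  rw [(isSelfAdjoint_truncDirac h L).star_eq, hQ.star_eq]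
  simp only [star_truncDerivation, neg_mul, Finset.sum_neg_distrib, ← sub_eq_add_neg]
  refine ((truncDirac_realizes L A G).mul (truncDirac_realizes L A G)).unique ?_
  rw [dirac_sq h.antiCommute h.isStarClifford.toIsClifford]
  exact ((hQ'.mul hQ').sub (.sum fun i _ => (hd i).mul (hd i))).add
    (.sum fun i _ => ((fibre_realizes _).mul (fibre_realizes _)).mul
      (((hd i).mul (hx i)).sub ((hx i).mul (hd i))))

theorem norm_sq_truncDirac_apply (h : IsDiracSymbol A G) (v : FockSpace ι W) :
    ‖truncDirac L A G v‖ ^ 2 =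
      ‖(∑ i, fibre ι W (A i) * truncPosition W L i) v‖ ^ 2
        + ∑ i, ‖truncDerivation W L i v‖ ^ 2
        + ∑ i, ⟪v, fibre ι W (G i * A i) ((truncDerivation W L i * truncPosition W L i
            - truncPosition W L i * truncDerivation W L i) v)⟫_ℝ := by
  simp only [norm_sq_apply_eq_inner_star_mul_self, star_truncDirac_mul_self h]
  rw [_root_.add_apply, _root_.add_apply, _root_.sum_apply, _root_.sum_apply]
  simp only [inner_add_right, inner_sum, map_mul]
  rfl

theorem hasSum_oscillator_energy {v : FockSpace ι W}
    (hv : v ∈ supportedOn ι W {k | ∀ i, k i + 1 < L}) :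
    HasSum (fun k => (4 * degree k + 2 * Fintype.card ι : ℝ) * ‖v k‖ ^ 2)
      (∑ i, ‖truncPosition W L i v‖ ^ 2 + ∑ i, ‖truncDerivation W L i v‖ ^ 2) := by
  have hd := truncDerivation_realizes (W := W) (ι := ι) L
  have hx := truncPosition_realizes (W := W) (ι := ι) L
  have star_position (i : ι) : star (truncPosition W L i) = truncPosition W L i :=
    isSelfAdjoint_truncPosition L i
  simp only [norm_sq_apply_eq_inner_star_mul_self, star_position, star_truncDerivation, neg_mul,
    ← Finset.sum_add_distrib, ← inner_add_right, ← inner_sum, ← _root_.add_apply,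
    ← sub_eq_add_neg, ← _root_.sum_apply]
  refine (lp.hasSum_inner (𝕜 := ℝ) (G := fun _ => W) v _).congr_fun fun k => ?_
  rw [Realizes.sum (fun i _ => ((hx i).mul (hx i)).sub ((hd i).mul (hd i))) v k,
    LinearMap.sum_apply, Finset.sum_apply]
  simp only [position_sq_sub_derivation_sq_apply (truncSqrt_zero L)]
  by_cases hk : v k = 0
  · simp [hk]
  · have hki := mem_of_mem_supportedOn hv hk
    simp only [truncSqrt_sq_of_lt (hki _), truncSqrt_sq_of_lt (Nat.lt_of_succ_lt (hki _)),
      ← Finset.sum_smul, real_inner_smul_right, real_inner_self_eq_norm_sq]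
    congr 1
    simp [degree, Finset.sum_add_distrib, ← Finset.mul_sum]
    ring

end EnergyEstimate

section LowerBound

open Module Filter
open scoped InnerProductSpace

theorem exists_box_of_finite {ι : Type*} [Finite ι] {s : Set (ι → ℕ)} (hs : s.Finite) :
    ∃ L, s ⊆ {k | ∀ i, k i + 1 < L} := by
  have := Fintype.ofFinite ι
  obtain ⟨L, hL⟩ := (hs.image degree).bddAbove
  exact ⟨L + 2, fun k hk i => by grind [hL ⟨k, hk, rfl⟩, le_degree k i]⟩

theorem supportedOn_mono {ι W : Type*} [NormedAddCommGroup W] [InnerProductSpace ℝ W]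
    {s t : Set (ι → ℕ)} (hst : s ⊆ t) : supportedOn ι W s ≤ supportedOn ι W t :=
  fun _ hu k hk => hu k fun hks => hk (hst hks)

theorem sum_single_mem_supportedOn {ι W : Type*} [NormedAddCommGroup W] [InnerProductSpace ℝ W]
    [DecidableEq (ι → ℕ)] {s : Set (ι → ℕ)} {u : FockSpace ι W} (hu : u ∈ supportedOn ι W s)
    (F : Finset (ι → ℕ)) :
    ∑ k ∈ F, lp.single 2 k (u k) ∈ supportedOn ι W (↑F ∩ s) := by
  refine Submodule.sum_mem _ fun k hk l hl => ?_
  rcases eq_or_ne l k with rfl | hlk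
  · simpa using hu l fun hls => hl ⟨hk, hls⟩
  · simp [hlk]

variable {ι W : Type*} [Fintype ι] [NormedAddCommGroup W] [InnerProductSpace ℝ W]

/-- The bounded operator realizing `invSqrtDegree`. -/
noncomputable def degreeWeight (ι W : Type*) [Fintype ι] [NormedAddCommGroup W]
    [InnerProductSpace ℝ W] : FockSpace ι W →L[ℝ] FockSpace ι W :=
  weightedComp (fun k => (√(degree k + 1))⁻¹ • 1) id Function.injective_id 1 fun k => by
    rw [norm_smul, norm_inv, Real.norm_of_nonneg (Real.sqrt_nonneg _)]
    exact mul_le_one₀ (inv_le_one_of_one_le₀ (Real.one_le_sqrt.2 (by simp))) (norm_nonneg _)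
      ContinuousLinearMap.norm_id_le

theorem degreeWeight_realizes : Realizes (degreeWeight ι W) invSqrtDegree :=
  fun _ _ => rfl

theorem degree_mul_norm_sq_degreeWeight (u : FockSpace ι W) (k : ι → ℕ) :
    (degree k + 1 : ℝ) * ‖degreeWeight ι W u k‖ ^ 2 = ‖u k‖ ^ 2 := by
  have hpos : (0 : ℝ) < degree k + 1 := by positivity
  rw [degreeWeight_realizes, invSqrtDegree_apply, norm_smul, mul_pow, norm_inv, inv_pow,
    Real.norm_eq_abs, sq_abs, Real.sq_sqrt hpos.le, mul_inv_cancel_left₀ hpos.ne']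

theorem degreeWeight_mem_supportedOn {s : Set (ι → ℕ)} {u : FockSpace ι W}
    (hu : u ∈ supportedOn ι W s) : degreeWeight ι W u ∈ supportedOn ι W s := fun k hk => by
  rw [degreeWeight_realizes, invSqrtDegree_apply, hu k hk, smul_zero]

theorem neg_mul_norm_sq_le_sum_inner_fibre [CompleteSpace W] (M : ι → W →L[ℝ] W)
    (v : FockSpace ι W) :
    -((∑ i, ‖M i‖) * ‖v‖ ^ 2) ≤ ∑ i, ⟪v, fibre ι W (M i) v⟫_ℝ := by
  rw [Finset.sum_mul, ← Finset.sum_neg_distrib]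
  refine Finset.sum_le_sum fun i _ => neg_le_of_abs_le ?_
  calc |⟪v, fibre ι W (M i) v⟫_ℝ|
    _ ≤ ‖v‖ * ‖fibre ι W (M i) v‖ := abs_real_inner_le_norm _ _
    _ ≤ ‖v‖ * (‖M i‖ * ‖v‖) := by
      gcongr
      exact (fibre ι W (M i)).le_of_opNorm_le (norm_fibre_le _) v
    _ = ‖M i‖ * ‖v‖ ^ 2 := by ring

variable [DecidableEq ι] [CompleteSpace W] {A G : ι → W →L[ℝ] W} {κ : ℝ} {L d : ℕ}

theorem normalizedDirac_eq_truncDirac {u : FockSpace ι W}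
    (hu : u ∈ supportedOn ι W {k | ∀ i, k i + 1 < L}) :
    normalizedDirac A G u = truncDirac L A G (degreeWeight ι W u) := by
  refine lp.ext (funext fun k => ?_)
  rw [normalizedDirac_realizes, truncDirac_realizes, End.mul_apply,
    ← funext (degreeWeight_realizes u)]
  refine congrFun (dirac_congr (by simp [truncSqrt_zero]) fun i l hl => ?_) k
  have hli := mem_of_mem_supportedOn (degreeWeight_mem_supportedOn hu) hl i
  exact ⟨(truncSqrt_of_lt (Nat.lt_of_succ_lt hli)).symm, (truncSqrt_of_lt hli).symm⟩

variable [FiniteDimensional ℝ W]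

theorem energy_sub_le_norm_sq_truncDirac (h : IsDiracSymbol A G) (hA : IsCoerciveSymbol κ A)
    (hκ : κ ≤ 1) {v : FockSpace ι W} (hv : v ∈ supportedOn ι W {k | ∀ i, k i + 1 < L}) :
    κ * (∑ i, ‖truncPosition W L i v‖ ^ 2 + ∑ i, ‖truncDerivation W L i v‖ ^ 2)
      - 2 * (∑ i, ‖G i * A i‖) * ‖v‖ ^ 2 ≤ ‖truncDirac L A G v‖ ^ 2 := by
  have hv' : v ∈ supportedOn ι W {k | ∀ i, k i < L} :=
    supportedOn_mono (fun k (hk : ∀ i, k i + 1 < L) i => Nat.lt_of_succ_lt (hk i)) hv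
  have hQ := hA.sum_truncPosition_le hv'
  have hD : κ * ∑ i, ‖truncDerivation W L i v‖ ^ 2 ≤ ∑ i, ‖truncDerivation W L i v‖ ^ 2 :=
    mul_le_of_le_one_left (Finset.sum_nonneg fun _ _ => sq_nonneg _) hκ
  have hGA := neg_mul_norm_sq_le_sum_inner_fibre (fun i => G i * A i) v
  simp only [norm_sq_truncDirac_apply h, truncDerivation_truncPosition_commutator hv, map_smul,
    real_inner_smul_right, ← Finset.mul_sum]
  linarith

theorem coercive_truncDirac (h : IsDiracSymbol A G) (hA : IsCoerciveSymbol κ A)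
    (hκ₀ : 0 ≤ κ) (hκ₁ : κ ≤ 1) (hd : 2 * ∑ i, ‖G i * A i‖ ≤ κ * (d + 1)) {v : FockSpace ι W}
    (hv : v ∈ supportedOn ι W {k | ∀ i, k i + 1 < L})
    (hvd : v ∈ supportedOn ι W {k | d < degree k}) {S : ℝ}
    (hS : HasSum (fun k => (degree k + 1 : ℝ) * ‖v k‖ ^ 2) S) :
    κ * S ≤ ‖truncDirac L A G v‖ ^ 2 := by
  refine le_trans (hasSum_le (fun k => ?_) (hS.mul_left κ)
    (((hasSum_oscillator_energy hv).mul_left κ).sub ((hasSum_norm_sq v).mul_left _)))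
    (energy_sub_le_norm_sq_truncDirac h hA hκ₁ hv)
  by_cases hk : v k = 0
  · simp [hk]
  have hdk : (d + 1 : ℝ) ≤ degree k := mod_cast mem_of_mem_supportedOn hvd hk
  have hweight : κ * (degree k + 1) ≤
      κ * (4 * degree k + 2 * Fintype.card ι) - 2 * ∑ i, ‖G i * A i‖ := by
    have : κ * ((degree k + 1) + (d + 1)) ≤ κ * (4 * degree k + 2 * Fintype.card ι) := by
      refine mul_le_mul_of_nonneg_left ?_ hκ₀
      linarith [(Fintype.card ι).cast_nonneg (α := ℝ), d.cast_nonneg (α := ℝ)]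
    linarith
  calc κ * ((degree k + 1) * ‖v k‖ ^ 2)
    _ = κ * (degree k + 1) * ‖v k‖ ^ 2 := by ring
    _ ≤ (κ * (4 * degree k + 2 * Fintype.card ι) - 2 * ∑ i, ‖G i * A i‖) * ‖v k‖ ^ 2 := by gcongr
    _ = _ := by ring

theorem coercive_normalizedDirac (h : IsDiracSymbol A G) (hA : IsCoerciveSymbol κ A)
    (hκ₀ : 0 ≤ κ) (hκ₁ : κ ≤ 1) (hd : 2 * ∑ i, ‖G i * A i‖ ≤ κ * (d + 1)) {u : FockSpace ι W}
    (hu : u ∈ supportedOn ι W {k | d < degree k}) :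
    κ * ‖u‖ ^ 2 ≤ ‖normalizedDirac A G u‖ ^ 2 := by
  classical
  let u' (F : Finset (ι → ℕ)) : FockSpace ι W := ∑ k ∈ F, lp.single 2 k (u k)
  have finite_case (F : Finset (ι → ℕ)) : κ * ‖u' F‖ ^ 2 ≤ ‖normalizedDirac A G (u' F)‖ ^ 2 := by
    obtain ⟨L, hL⟩ := exists_box_of_finite F.finite_toSet
    have hF := sum_single_mem_supportedOn hu F
    have hbox := supportedOn_mono (Set.inter_subset_left.trans hL) hF
    rw [normalizedDirac_eq_truncDirac hbox]
    refine coercive_truncDirac h hA hκ₀ hκ₁ hd (degreeWeight_mem_supportedOn hbox)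
      (degreeWeight_mem_supportedOn (supportedOn_mono Set.inter_subset_right hF)) ?_
    simpa only [degree_mul_norm_sq_degreeWeight] using hasSum_norm_sq (u' F)
  have hu' : Tendsto u' atTop (nhds u) := lp.hasSum_single (by simp) u
  exact le_of_tendsto_of_tendsto' ((hu'.norm.pow 2).const_mul κ)
    ((((normalizedDirac A G).continuous.tendsto u).comp hu').norm.pow 2) finite_case

end LowerBound

section Index

open Module
open scoped InnerProductSpace

variable {ι W : Type*} [NormedAddCommGroup W] [InnerProductSpace ℝ W]

instance [CompleteSpace W] (s : Set (ι → ℕ)) : CompleteSpace (supportedOn ι W s) :=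
  (isClosed_supportedOn s).completeSpace_coe

theorem inner_eq_zero_on_supportedOn_iff {s : Set (ι → ℕ)} {v : FockSpace ι W} :
    (∀ u ∈ supportedOn ι W s, ⟪u, v⟫_ℝ = 0) ↔ ∀ k ∈ s, v k = 0 := by
  classical
  constructor
  · intro h k hk
    refine inner_self_eq_zero.1 ((lp.inner_single_left (𝕜 := ℝ) k (v k) v).symm.trans (h _ ?_))
    intro l hl
    simp [show l ≠ k from fun hlk => hl (hlk ▸ hk)]
  · intro h u hu
    rw [lp.inner_eq_tsum]
    convert tsum_zero with k
    by_cases hk : k ∈ s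
    · rw [h k hk, inner_zero_right]
    · rw [hu k hk, inner_zero_left]

theorem IsDiracSymbol.smul_add_smul [CompleteSpace W] {A B G : ι → W →L[ℝ] W}
    (hA : IsDiracSymbol A G) (hB : IsDiracSymbol B G) (r s : ℝ) :
    IsDiracSymbol (r • A + s • B) G where
  isSelfAdjoint i :=
    .add (.smul (.all r) (hA.isSelfAdjoint i)) (.smul (.all s) (hB.isSelfAdjoint i))
  isStarClifford := hA.isStarClifford
  antiCommute i j := by
    have hAj : G i * A j = -(A j * G i) := hA.antiCommute i j
    have hBj : G i * B j = -(B j * G i) := hB.antiCommute i j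
    simp only [AntiCommute, Pi.add_apply, Pi.smul_apply, mul_add, add_mul, mul_smul_comm,
      smul_mul_assoc, neg_add, hAj, hBj, smul_neg]

variable [Fintype ι]

/-- The multi-indices of even degree exceeding `d`. -/
def evenIndicesAbove (ι : Type*) [Fintype ι] (d : ℕ) : Set (ι → ℕ) :=
  {k | d < degree k ∧ Even (degree k)}

/-- The multi-indices of odd degree. -/
def oddIndices (ι : Type*) [Fintype ι] : Set (ι → ℕ) := {k | ¬ Even (degree k)}

variable [DecidableEq ι]

variable [CompleteSpace W] {A B G : ι → W →L[ℝ] W} {κ : ℝ} {d : ℕ}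

/-- The odd expansions which the adjoint of `normalizedDirac A G` maps to expansions without even
components of degree exceeding `d`: the orthogonal complement, among the odd expansions, of the
range of `normalizedDirac A G` on the even expansions of degree exceeding `d`. -/
noncomputable def diracCokernel (d : ℕ) (A G : ι → W →L[ℝ] W) : Submodule ℝ (FockSpace ι W) :=
  supportedOn ι W (oddIndices ι) ⊓
    (supportedOn ι W (evenIndicesAbove ι d)ᶜ).comap (star (normalizedDirac A G)).toLinearMap

theorem normalizedDirac_mem_supportedOn_odd {u : FockSpace ι W}
    (hu : u ∈ supportedOn ι W {k | Even (degree k)}) :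
    normalizedDirac A G u ∈ supportedOn ι W (oddIndices ι) := fun k hk => by
  rw [normalizedDirac_realizes, End.mul_apply]
  refine dirac_apply_eq_zero_of_parity (by simp) fun l hl => ?_
  rw [invSqrtDegree_apply, hu l fun h => hk (hl.1 h), smul_zero]

/-- The normalized oscillator from even expansions of degree exceeding `d` to odd expansions. -/
noncomputable def evenDirac (d : ℕ) (A G : ι → W →L[ℝ] W) :
    supportedOn ι W (evenIndicesAbove ι d) →L[ℝ] supportedOn ι W (oddIndices ι) :=
  (supportedOn ι W (oddIndices ι)).orthogonalProjectionOnto.comp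
    ((normalizedDirac A G).comp (supportedOn ι W (evenIndicesAbove ι d)).subtypeL)

theorem coe_evenDirac_apply (u : supportedOn ι W (evenIndicesAbove ι d)) :
    (evenDirac d A G u : FockSpace ι W) = normalizedDirac A G u :=
  Submodule.starProjection_eq_self_iff.2
    (normalizedDirac_mem_supportedOn_odd (supportedOn_mono (fun _ hk => hk.2) u.2))

theorem map_subtype_orthogonal_range_evenDirac :
    (evenDirac d A G).rangeᗮ.map (supportedOn ι W (oddIndices ι)).subtype =
      diracCokernel d A G := by
  have mem_iff (w : supportedOn ι W (oddIndices ι)) :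
      w ∈ (evenDirac d A G).rangeᗮ ↔
        star (normalizedDirac A G) (w : FockSpace ι W) ∈
          supportedOn ι W (evenIndicesAbove ι d)ᶜ := by
    have inner_eq (u : supportedOn ι W (evenIndicesAbove ι d)) :
        ⟪evenDirac d A G u, w⟫_ℝ = ⟪(u : FockSpace ι W), star (normalizedDirac A G) w⟫_ℝ := by
      rw [Submodule.coe_inner, coe_evenDirac_apply, ContinuousLinearMap.star_eq_adjoint,
        ContinuousLinearMap.adjoint_inner_right]
    simp only [mem_supportedOn, Set.mem_compl_iff, not_not, ← inner_eq_zero_on_supportedOn_iff]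
    exact ⟨fun hw u hu => (inner_eq ⟨u, hu⟩).symm.trans (hw _ ⟨_, rfl⟩),
      fun hw _ ⟨u, hu⟩ => hu ▸ (inner_eq u).trans (hw u u.2)⟩
  ext w
  constructor
  · rintro ⟨w, hw, rfl⟩
    exact ⟨w.2, (mem_iff w).1 hw⟩
  · exact fun hw => ⟨⟨w, hw.1⟩, (mem_iff ⟨w, hw.1⟩).2 hw.2, rfl⟩

theorem finrank_orthogonal_range_evenDirac :
    finrank ℝ (evenDirac d A G).rangeᗮ = finrank ℝ (diracCokernel d A G) := by
  rw [← map_subtype_orthogonal_range_evenDirac, Submodule.finrank_map_subtype_eq]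

theorem exists_antilipschitzWith_evenDirac [FiniteDimensional ℝ W] (h : IsDiracSymbol A G)
    (hA : IsCoerciveSymbol κ A) (hκ₀ : 0 < κ) (hκ₁ : κ ≤ 1)
    (hd : 2 * ∑ i, ‖G i * A i‖ ≤ κ * (d + 1)) :
    ∃ K, AntilipschitzWith K (evenDirac d A G) := by
  refine ⟨(NNReal.sqrt κ.toNNReal)⁻¹, AddMonoidHomClass.antilipschitz_of_bound _ fun u => ?_⟩
  have hu : κ * ‖u‖ ^ 2 ≤ ‖evenDirac d A G u‖ ^ 2 :=
    (coercive_normalizedDirac h hA hκ₀.le hκ₁ hd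
      (supportedOn_mono (fun _ hk => hk.1) u.2)).trans_eq
      congr(‖$((coe_evenDirac_apply u).symm)‖ ^ 2)
  rw [NNReal.coe_inv, Real.coe_sqrt, Real.coe_toNNReal _ hκ₀.le, inv_mul_eq_div,
    le_div_iff₀' (Real.sqrt_pos.2 hκ₀)]
  exact (sq_le_sq₀ (by positivity) (norm_nonneg _)).1 (by rwa [mul_pow, Real.sq_sqrt hκ₀.le])

theorem continuous_evenDirac_smul_add_smul (d : ℕ) (A B G : ι → W →L[ℝ] W) :
    Continuous fun θ : ℝ => evenDirac d (Real.cos θ • A + Real.sin θ • B) G := by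
  simp only [evenDirac, normalizedDirac_smul_add_smul]
  fun_prop

theorem finrank_diracCokernel_eq [FiniteDimensional ℝ W] (hA : IsDiracSymbol A G)
    (hB : IsDiracSymbol B G) (hκ₀ : 0 < κ) (hκ₁ : κ ≤ 1)
    (hpath : ∀ θ : ℝ, IsCoerciveSymbol κ (Real.cos θ • A + Real.sin θ • B))
    (hd : 2 * ∑ i, ‖G i‖ * (‖A i‖ + ‖B i‖) ≤ κ * (d + 1)) :
    finrank ℝ (diracCokernel d A G) = finrank ℝ (diracCokernel d B G) := by
  let path (θ : ℝ) : ι → W →L[ℝ] W := Real.cos θ • A + Real.sin θ • B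
  have hsymbol (θ : ℝ) : IsDiracSymbol (path θ) G := hA.smul_add_smul hB _ _
  have hbound (θ : ℝ) : 2 * ∑ i, ‖G i * path θ i‖ ≤ κ * (d + 1) := by
    refine le_trans ?_ hd
    gcongr with i
    refine (norm_mul_le _ _).trans ?_
    gcongr
    refine (norm_add_le _ _).trans (add_le_add ?_ ?_)
    · simpa [norm_smul] using mul_le_of_le_one_left (norm_nonneg (A i)) (Real.abs_cos_le_one θ)
    · simpa [norm_smul] using mul_le_of_le_one_left (norm_nonneg (B i)) (Real.abs_sin_le_one θ)
  have hconst := finrank_range_orthogonal_eq (continuous_evenDirac_smul_add_smul d A B G)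
    (fun θ => exists_antilipschitzWith_evenDirac (hsymbol θ) (hpath θ) hκ₀ hκ₁ (hbound θ))
    0 (Real.pi / 2)
  have path_zero : path 0 = A := by simp [path]
  have path_pi_div_two : path (Real.pi / 2) = B := by simp [path]
  rw [finrank_orthogonal_range_evenDirac, finrank_orthogonal_range_evenDirac] at hconst
  rwa [← path_zero, ← path_pi_div_two]

end Index

section JointFixedSpace

open Module

variable {V : Type*} [AddCommGroup V] [Module ℝ V]

theorem finrank_eq_two_mul_finrank_inf_eqLocus [FiniteDimensional ℝ V] {e g : End ℝ V}
    (he : e * e = 1) (hg : g * g = 1) (heg : AntiCommute e g) {U : Submodule ℝ V}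
    (heU : ∀ v ∈ U, e v ∈ U) (hgU : ∀ v ∈ U, g v ∈ U) :
    finrank ℝ U = 2 * finrank ℝ (U ⊓ LinearMap.eqLocus g LinearMap.id : Submodule ℝ V) := by
  have sq_restrict {f : End ℝ V} (hf : f * f = 1) (hfU : ∀ v ∈ U, f v ∈ U) :
      f.restrict hfU * f.restrict hfU = 1 := by
    ext v
    simpa using LinearMap.congr_fun hf v
  have heg' : AntiCommute (e.restrict heU) (g.restrict hgU) := by
    ext v
    simpa using LinearMap.congr_fun heg v
  have hmap : (LinearMap.eqLocus (g.restrict hgU) LinearMap.id).map U.subtype =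
      U ⊓ LinearMap.eqLocus g LinearMap.id := by
    ext v
    simp only [Submodule.mem_map, Submodule.subtype_apply, LinearMap.mem_eqLocus,
      Submodule.mem_inf, LinearMap.id_apply]
    exact ⟨fun ⟨u, hu, huv⟩ => huv ▸ ⟨u.2, congrArg Subtype.val hu⟩,
      fun ⟨hvU, hv⟩ => ⟨⟨v, hvU⟩, Subtype.ext hv, rfl⟩⟩
  rw [finrank_eq_two_mul_of_antiCommute (sq_restrict he heU) (sq_restrict hg hgU) heg', ← hmap,
    Submodule.finrank_map_subtype_eq]

theorem map_mem_iInf_eqLocus {ι : Type*} {f : End ℝ V} {P : ι → End ℝ V} {s : Finset ι}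
    (hf : ∀ i ∈ s, Commute (P i) f) {v : V}
    (hv : v ∈ ⨅ i ∈ s, LinearMap.eqLocus (P i) LinearMap.id) :
    f v ∈ ⨅ i ∈ s, LinearMap.eqLocus (P i) LinearMap.id := by
  simp only [Submodule.mem_iInf, LinearMap.mem_eqLocus, LinearMap.id_apply] at hv ⊢
  exact fun i hi => (LinearMap.congr_fun (hf i hi).eq v).trans (congrArg f (hv i hi))

theorem finrank_eq_two_pow_mul_finrank_iInf_eqLocus [FiniteDimensional ℝ V] {ι : Type*}
    {P E : ι → End ℝ V} (hP : ∀ i, P i * P i = 1) (hE : ∀ i, E i * E i = 1)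
    (hEP : ∀ i, AntiCommute (E i) (P i)) (hEP' : Pairwise fun i j => Commute (P i) (E j))
    (hPP : Pairwise fun i j => Commute (P i) (P j))
    (s : Finset ι) :
    finrank ℝ V =
      2 ^ s.card * finrank ℝ (⨅ i ∈ s, LinearMap.eqLocus (P i) LinearMap.id : Submodule ℝ V) := by
  classical
  induction s using Finset.induction_on with
  | empty =>
    have : (⨅ i ∈ (∅ : Finset ι), LinearMap.eqLocus (P i) LinearMap.id) = ⊤ := by simp
    rw [this, finrank_top, Finset.card_empty, pow_zero, one_mul]
  | insert j s hj ih =>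
    have ne_of_mem {i} (hi : i ∈ s) : i ≠ j := fun hij => hj (hij ▸ hi)
    rw [ih, finrank_eq_two_mul_finrank_inf_eqLocus (hE j) (hP j) (hEP j)
      (fun _ hv => map_mem_iInf_eqLocus (fun i hi => hEP' (ne_of_mem hi)) hv)
      (fun _ hv => map_mem_iInf_eqLocus (fun i hi => hPP (ne_of_mem hi)) hv),
      Finset.card_insert_of_notMem hj, Finset.iInf_insert, inf_comm, pow_succ, mul_assoc]

end JointFixedSpace

section GroundSpace

open Module
open scoped InnerProductSpace

variable {ι W : Type*} [NormedAddCommGroup W] [InnerProductSpace ℝ W]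

/-- The values in `W` which, times the Gaussian, are annihilated by `∑ i, G i ∂ᵢ + A i xᵢ` when the
`A i` are a Clifford system. -/
def groundSpace (A G : ι → W →L[ℝ] W) : Submodule ℝ W :=
  ⨅ i, LinearMap.eqLocus (A i * G i).toLinearMap LinearMap.id

theorem mem_groundSpace {A G : ι → W →L[ℝ] W} {w : W} :
    w ∈ groundSpace A G ↔ ∀ i, (A i * G i) w = w := by
  simp [groundSpace, LinearMap.mem_eqLocus]

variable [CompleteSpace W] {A G : ι → W →L[ℝ] W}

theorem IsDiracSymbol.mul_mul_self (h : IsDiracSymbol A G) (hA : IsClifford (fun _ => 1) A)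
    (i : ι) : A i * G i * (A i * G i) = 1 := by
  rw [(h.antiCommute i i).symm.mul_mul_self, hA.mul_self, h.isStarClifford.mul_self]
  simp

theorem IsDiracSymbol.isSelfAdjoint_mul (h : IsDiracSymbol A G) (i : ι) :
    IsSelfAdjoint (A i * G i) := by
  rw [IsSelfAdjoint, star_mul, (h.isSelfAdjoint i).star_eq, h.isStarClifford.star_eq,
    (h.antiCommute i i).symm]
  simp

theorem finrank_eq_two_pow_mul_finrank_groundSpace [Fintype ι] [FiniteDimensional ℝ W]
    (h : IsDiracSymbol A G) (hA : IsClifford (fun _ => 1) A) :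
    finrank ℝ W = 2 ^ Fintype.card ι * finrank ℝ (groundSpace A G) := by
  let toEnd : (W →L[ℝ] W) →+* End ℝ W := ContinuousLinearMap.toLinearMapRingHom
  have antiCommute_A (i) : AntiCommute (A i) (A i * G i) :=
    (h.antiCommute i i).symm.mul_right_of_commute_left (Commute.refl _)
  have commute_A : Pairwise fun i j => Commute (A i * G i) (A j) := fun i j hij =>
    ((hA.antiCommute hij.symm).mul_right (h.antiCommute i j).symm).symm
  have commute_G : Pairwise fun i j => Commute (A i * G i) (G j) := fun i j hij =>
    ((h.antiCommute j i).mul_right (h.isStarClifford.antiCommute hij.symm)).symm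
  have sq {f : W →L[ℝ] W} (hf : f * f = 1) : toEnd f * toEnd f = 1 := by
    rw [← map_mul, hf, map_one]
  have groundSpace_eq : groundSpace A G =
      ⨅ i ∈ Finset.univ, LinearMap.eqLocus (toEnd (A i * G i)) LinearMap.id := by
    simp only [Finset.mem_univ, iInf_pos]
    rfl
  rw [groundSpace_eq, ← Finset.card_univ]
  exact finrank_eq_two_pow_mul_finrank_iInf_eqLocus (P := fun i => toEnd (A i * G i))
    (E := fun i => toEnd (A i)) (fun i => sq (h.mul_mul_self hA i))
    (fun i => sq (by simpa using hA.mul_self i)) (fun i => (antiCommute_A i).map toEnd)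
    (fun _ _ hij => (commute_A hij).map toEnd)
    (fun _ _ hij => ((commute_A hij).mul_right (commute_G hij)).map toEnd) Finset.univ

theorem two_mul_inner_sub_self_eq_norm_sq {P : W →L[ℝ] W} (hP : IsSelfAdjoint P) (hPP : P * P = 1)
    (w : W) : 2 * ⟪w, w - P w⟫_ℝ = ‖w - P w‖ ^ 2 := by
  have sq : star (1 - P) * (1 - P) = (2 : ℝ) • (1 - P) := by
    rw [star_sub, star_one, hP.star_eq, mul_sub, sub_mul, sub_mul, hPP, two_smul]
    noncomm_ring
  have := norm_sq_apply_eq_inner_star_mul_self (1 - P) w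
  rw [sq] at this
  simpa [inner_smul_right] using this.symm

variable [Fintype ι]

theorem smul_add_sum_two_smul_sub_eq_zero_iff (h : IsDiracSymbol A G)
    (hA : IsClifford (fun _ => 1) A) {c : ℝ} (hc : 0 ≤ c) {w : W} :
    c • w + ∑ i, (2 : ℝ) • (w - (A i * G i) w) = 0 ↔ (c = 0 ∨ w = 0) ∧ w ∈ groundSpace A G := by
  constructor
  · intro hw
    have energy : c * ‖w‖ ^ 2 + ∑ i, ‖w - (A i * G i) w‖ ^ 2 = 0 := by
      simpa only [inner_add_right, inner_smul_right, inner_sum, inner_zero_right,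
        real_inner_self_eq_norm_sq,
        two_mul_inner_sub_self_eq_norm_sq (h.isSelfAdjoint_mul _) (h.mul_mul_self hA _)]
        using congr(⟪w, $hw⟫_ℝ)
    have nonneg : 0 ≤ ∑ i, ‖w - (A i * G i) w‖ ^ 2 := by positivity
    obtain ⟨hcw, hsum⟩ := (add_eq_zero_iff_of_nonneg (by positivity) nonneg).1 energy
    refine ⟨by simpa using hcw, mem_groundSpace.2 fun i => ?_⟩
    have hi := (Finset.sum_eq_zero_iff_of_nonneg fun i _ => by positivity).1 hsum i
      (Finset.mem_univ i)
    exact (sub_eq_zero.1 (by simpa using hi)).symm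
  · rintro ⟨hcw, hw⟩
    simp [mem_groundSpace.1 hw, hcw]

end GroundSpace

section EndpointIndex

open Module

theorem finrank_eq_add_finrank_ker_of_injective_comp {𝕜 X Y : Type*} [DivisionRing 𝕜]
    [AddCommGroup X] [Module 𝕜 X] [AddCommGroup Y] [Module 𝕜 Y] [FiniteDimensional 𝕜 Y]
    (f : X →ₗ[𝕜] Y) (g : Y →ₗ[𝕜] X) (hgf : Function.Injective (g ∘ₗ f)) :
    finrank 𝕜 Y = finrank 𝕜 X + finrank 𝕜 g.ker := by
  have : FiniteDimensional 𝕜 X := .of_injective f (.of_comp hgf)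
  have hg : Function.Surjective g := .of_comp (LinearMap.injective_iff_surjective.1 hgf)
  rw [← g.finrank_range_add_finrank_ker, LinearMap.range_eq_top.2 hg, finrank_top]

theorem degree_eq_zero_iff {ι : Type*} [Fintype ι] {k : ι → ℕ} : degree k = 0 ↔ k = 0 := by
  simp [degree, Finset.sum_eq_zero_iff, funext_iff]

variable {ι W : Type*} [Fintype ι] [DecidableEq ι] [NormedAddCommGroup W] [InnerProductSpace ℝ W]
  [CompleteSpace W] {A G : ι → W →L[ℝ] W} {d : ℕ}

theorem IsDiracSymbol.dirac_sq_eq_sum (h : IsDiracSymbol A G) (hA : IsClifford (fun _ => 1) A)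
    (c : ℕ → ℝ) :
    dirac c A G * dirac c A G =
      ∑ i, (position c i * position c i - derivation c i * derivation c i
        + coeffwise (G i) * coeffwise (A i) *
          (derivation c i * position c i - position c i * derivation c i)) := by
  have position_sq : (∑ i, coeffwise (A i) * position c i) * (∑ i, coeffwise (A i) * position c i) =
      ∑ i, position c i * position c i := by
    simpa using (hA.map (coeffwise (ι := ι)).toRingHom).sum_mul_mul_self
      (fun _ _ => commute_coeffwise_position _ _) commute_position
  rw [dirac_sq h.antiCommute h.isStarClifford.toIsClifford, position_sq,
    ← Finset.sum_sub_distrib, ← Finset.sum_add_distrib]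

theorem oscillatorDirac_sq_apply (h : IsDiracSymbol A G) (hA : IsClifford (fun _ => 1) A)
    (w : (ι → ℕ) → W) (k : ι → ℕ) :
    oscillatorDirac A G (oscillatorDirac A G w) k =
      (4 * degree k : ℝ) • w k + ∑ i, (2 : ℝ) • (w k - (A i * G i) (w k)) := by
  rw [← End.mul_apply, oscillatorDirac, h.dirac_sq_eq_sum hA, LinearMap.sum_apply,
    Finset.sum_apply, degree, Nat.cast_sum, Finset.mul_sum, Finset.sum_smul,
    ← Finset.sum_add_distrib]
  refine Finset.sum_congr rfl fun i _ => ?_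
  have hGA : G i * A i = -(A i * G i) := h.antiCommute i i
  rw [LinearMap.add_apply, Pi.add_apply, position_sq_sub_derivation_sq_apply (by simp),
    ← map_mul, hGA, End.mul_apply, coeffwise_apply,
    derivation_position_commutator_apply (by simp), Real.sq_sqrt (by positivity),
    Real.sq_sqrt (by positivity), _root_.neg_apply, map_smul]
  push_cast
  module

theorem oscillatorDirac_sq_apply_eq_zero_iff (h : IsDiracSymbol A G)
    (hA : IsClifford (fun _ => 1) A) {w : (ι → ℕ) → W} {k : ι → ℕ} :
    oscillatorDirac A G (oscillatorDirac A G w) k = 0 ↔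
      (k = 0 ∨ w k = 0) ∧ w k ∈ groundSpace A G := by
  rw [oscillatorDirac_sq_apply h hA, smul_add_sum_two_smul_sub_eq_zero_iff h hA (by positivity),
    mul_eq_zero_iff_left (by norm_num), Nat.cast_eq_zero, degree_eq_zero_iff]

theorem star_normalizedDirac_apply_eq_zero_iff (h : IsDiracSymbol A G) {u : FockSpace ι W}
    {k : ι → ℕ} : star (normalizedDirac A G) u k = 0 ↔ oscillatorDirac A G u k = 0 := by
  rw [star_normalizedDirac_realizes h, End.mul_apply, invSqrtDegree_apply, smul_eq_zero_iff_right]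
  positivity

theorem star_normalizedDirac_normalizedDirac_apply_eq_zero_iff (h : IsDiracSymbol A G)
    (hA : IsClifford (fun _ => 1) A) {u : FockSpace ι W} {k : ι → ℕ} :
    star (normalizedDirac A G) (normalizedDirac A G u) k = 0 ↔
      (k = 0 ∨ u k = 0) ∧ u k ∈ groundSpace A G := by
  have hk : (√(degree k + 1 : ℝ))⁻¹ ≠ 0 := by positivity
  have coeffs : ⇑(normalizedDirac A G u) = oscillatorDirac A G (invSqrtDegree u) :=
    funext (normalizedDirac_realizes A G u)
  rw [star_normalizedDirac_apply_eq_zero_iff h, coeffs, oscillatorDirac_sq_apply_eq_zero_iff h hA,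
    invSqrtDegree_apply, smul_eq_zero_iff_right hk, Submodule.smul_mem_iff _ hk]

theorem normalizedDirac_eq_zero_iff (h : IsDiracSymbol A G) (hA : IsClifford (fun _ => 1) A)
    {u : FockSpace ι W} :
    normalizedDirac A G u = 0 ↔ ∀ k, (k = 0 ∨ u k = 0) ∧ u k ∈ groundSpace A G := by
  have : star (normalizedDirac A G) (normalizedDirac A G u) = 0 ↔ normalizedDirac A G u = 0 :=
    SetLike.ext_iff.1 (normalizedDirac A G).ker_adjoint_comp_self u
  rw [← this, lp.ext_iff, funext_iff]
  exact forall_congr' fun k => star_normalizedDirac_normalizedDirac_apply_eq_zero_iff h hA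

theorem eq_zero_of_normalizedDirac_star_normalizedDirac_eq_zero (h : IsDiracSymbol A G)
    (hA : IsClifford (fun _ => 1) A) {u : FockSpace ι W} (hu : u ∈ supportedOn ι W (oddIndices ι))
    (hNu : normalizedDirac A G (star (normalizedDirac A G) u) = 0) : u = 0 := by
  have star_eq_zero : star (normalizedDirac A G) u = 0 :=
    (SetLike.ext_iff.1 (normalizedDirac A G).ker_self_comp_adjoint u).1 hNu
  have dirac_eq_zero : oscillatorDirac A G u = 0 := funext fun k =>
    (star_normalizedDirac_apply_eq_zero_iff h).1 (by rw [star_eq_zero]; rfl)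
  ext1
  funext k
  by_cases hk : k ∈ oddIndices ι
  · have hk₀ : k ≠ 0 := by
      rintro rfl
      exact hk (by simp [degree])
    refine (((oscillatorDirac_sq_apply_eq_zero_iff h hA).1 ?_).1).resolve_left hk₀
    rw [dirac_eq_zero, map_zero]
    rfl
  · exact hu k hk

theorem star_normalizedDirac_mem_supportedOn_even (h : IsDiracSymbol A G) {u : FockSpace ι W}
    (hu : u ∈ supportedOn ι W (oddIndices ι)) :
    star (normalizedDirac A G) u ∈ supportedOn ι W {k | Even (degree k)} := fun k hk => by
  rw [star_normalizedDirac_apply_eq_zero_iff h]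
  exact dirac_apply_eq_zero_of_parity (by simp) fun l hl => hu l fun hl' => hl' (hl.2 hk)

/-- The multi-indices of even degree at most `d`. -/
def evenIndicesUpTo (ι : Type*) [Fintype ι] (d : ℕ) : Set (ι → ℕ) :=
  {k | degree k ≤ d ∧ Even (degree k)}

theorem star_normalizedDirac_mem_supportedOn (h : IsDiracSymbol A G) {u : FockSpace ι W}
    (hu : u ∈ diracCokernel d A G) :
    star (normalizedDirac A G) u ∈ supportedOn ι W (evenIndicesUpTo ι d) := fun k hk => by
  by_cases heven : Even (degree k)
  · exact hu.2 k (not_not.2 ⟨not_le.1 fun hkd => hk ⟨hkd, heven⟩, heven⟩)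
  · exact star_normalizedDirac_mem_supportedOn_even h hu.1 k heven

theorem normalizedDirac_mem_diracCokernel (h : IsDiracSymbol A G) (hA : IsClifford (fun _ => 1) A)
    {u : FockSpace ι W} (hu : u ∈ supportedOn ι W (evenIndicesUpTo ι d)) :
    normalizedDirac A G u ∈ diracCokernel d A G := by
  refine ⟨normalizedDirac_mem_supportedOn_odd (supportedOn_mono (fun k hk => hk.2) hu),
    fun k hk => (star_normalizedDirac_normalizedDirac_apply_eq_zero_iff h hA).2 ?_⟩
  have huk : u k = 0 := hu k fun hk' => (not_not.1 hk).1.not_ge hk'.1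
  exact ⟨.inr huk, huk ▸ zero_mem _⟩

theorem supportedOn_inf_ker_normalizedDirac (h : IsDiracSymbol A G)
    (hA : IsClifford (fun _ => 1) A) :
    supportedOn ι W (evenIndicesUpTo ι d) ⊓ (normalizedDirac A G).ker =
      (groundSpace A G).map (lp.lsingle (𝕜 := ℝ) (E := fun _ : ι → ℕ => W) 2 0) := by
  ext u
  constructor
  · rintro ⟨-, hu⟩
    have hu' := (normalizedDirac_eq_zero_iff h hA).1 hu
    refine ⟨u 0, (hu' 0).2, lp.ext (funext fun k => ?_)⟩
    rcases eq_or_ne k 0 with rfl | hk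
    · simp
    · simp [hk, (hu' k).1.resolve_left hk]
  · rintro ⟨w, hw, rfl⟩
    refine ⟨fun k hk => ?_, (normalizedDirac_eq_zero_iff h hA).2 fun k => ?_⟩
    · have hk₀ : k ≠ 0 := by
        rintro rfl
        exact hk (by simp [evenIndicesUpTo, degree])
      simp [hk₀]
    · rcases eq_or_ne k 0 with rfl | hk
      · simpa using hw
      · simp [hk]

theorem finrank_supportedOn_eq_add [FiniteDimensional ℝ W] (h : IsDiracSymbol A G)
    (hA : IsClifford (fun _ => 1) A) (d : ℕ) :
    finrank ℝ (supportedOn ι W (evenIndicesUpTo ι d)) =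
      finrank ℝ (diracCokernel d A G) + finrank ℝ (groundSpace A G) := by
  have := finiteDimensional_supportedOn (W := W)
    ((finite_setOf_degree_le d).subset fun k (hk : k ∈ evenIndicesUpTo ι d) => hk.1)
  let f := (star (normalizedDirac A G)).toLinearMap.restrict
    fun _ hu => star_normalizedDirac_mem_supportedOn (d := d) h hu
  let g := (normalizedDirac A G).toLinearMap.restrict
    fun _ hu => normalizedDirac_mem_diracCokernel (d := d) h hA hu
  have hgf : Function.Injective (g ∘ₗ f) := (injective_iff_map_eq_zero _).2 fun u hu =>
    Subtype.ext (eq_zero_of_normalizedDirac_star_normalizedDirac_eq_zero h hA u.2.1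
      (congrArg Subtype.val hu))
  have ker_g : g.ker.map (supportedOn ι W (evenIndicesUpTo ι d)).subtype =
      (groundSpace A G).map (lp.lsingle (𝕜 := ℝ) (E := fun _ : ι → ℕ => W) 2 0) := by
    rw [← supportedOn_inf_ker_normalizedDirac (d := d) h hA, ← Submodule.map_comap_subtype,
      LinearMap.ker_restrict]
  have single_injective :
      Function.Injective (lp.lsingle (𝕜 := ℝ) (E := fun _ : ι → ℕ => W) 2 0) := fun w w' hw => by
    simpa using congr(($hw : FockSpace ι W) 0)
  rw [finrank_eq_add_finrank_ker_of_injective_comp f g hgf, ← Submodule.finrank_map_subtype_eq,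
    ker_g, ← (Submodule.equivMapOfInjective _ single_injective _).finrank_eq]

end EndpointIndex

section Coercivity

open scoped InnerProductSpace

theorem exists_pos_forall_mul_norm_mul_norm_le {E F H : Type*} [NormedAddCommGroup E]
    [NormedSpace ℝ E] [FiniteDimensional ℝ E] [NormedAddCommGroup F] [NormedSpace ℝ F]
    [FiniteDimensional ℝ F] [NormedAddCommGroup H] [NormedSpace ℝ H] (B : E →L[ℝ] F →L[ℝ] H)
    (hB : ∀ x y, B x y = 0 → x = 0 ∨ y = 0) :
    ∃ κ > 0, ∀ x y, κ * ‖x‖ * ‖y‖ ≤ ‖B x y‖ := by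
  have : ProperSpace E := .of_locallyCompactSpace ℝ
  have : ProperSpace F := FiniteDimensional.proper_real F
  have isCompact : IsCompact (Metric.sphere (0 : E) 1 ×ˢ Metric.sphere (0 : F) 1) :=
    (isCompact_sphere 0 1).prod (isCompact_sphere 0 1)
  obtain ⟨κ, hκ, hle⟩ := isCompact.exists_forall_le' (f := fun p => ‖B p.1 p.2‖) (a := 0)
    (by fun_prop) fun p hp => norm_pos_iff.2 fun h =>
      (hB _ _ h).elim (ne_zero_of_mem_unit_sphere ⟨p.1, hp.1⟩)
        (ne_zero_of_mem_unit_sphere ⟨p.2, hp.2⟩)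
  refine ⟨κ, hκ, fun x y => ?_⟩
  rcases eq_or_ne x 0 with rfl | hx
  · simp
  rcases eq_or_ne y 0 with rfl | hy
  · simp
  have := hle (‖x‖⁻¹ • x, ‖y‖⁻¹ • y) ⟨by simp [norm_smul, hx], by simp [norm_smul, hy]⟩
  simp only [map_smul, _root_.smul_apply, norm_smul, norm_inv, norm_norm] at this
  field_simp at this
  linarith

variable {ι W : Type*} [Fintype ι] [NormedAddCommGroup W] [InnerProductSpace ℝ W]
  {A B : ι → W →L[ℝ] W} {κ : ℝ}

theorem exists_isCoerciveSymbol [FiniteDimensional ℝ W]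
    (hA : ∀ (x : ι → ℝ) w, ∑ i, x i • A i w = 0 → x = 0 ∨ w = 0) :
    ∃ κ > 0, IsCoerciveSymbol κ A := by
  let symbol : EuclideanSpace ℝ ι →L[ℝ] W →L[ℝ] W :=
    ∑ i, (EuclideanSpace.proj i : EuclideanSpace ℝ ι →L[ℝ] ℝ).smulRight (A i)
  have symbol_apply (x w) : symbol x w = ∑ i, x i • A i w := by
    simp [symbol, _root_.sum_apply]
  obtain ⟨κ, hκ, hle⟩ := exists_pos_forall_mul_norm_mul_norm_le symbol fun x w hxw =>
    (hA x w ((symbol_apply x w).symm.trans hxw)).imp_left (WithLp.ofLp_injective 2 ·)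
  refine ⟨κ ^ 2, by positivity, fun x w => ?_⟩
  calc κ ^ 2 * (∑ i, x i ^ 2) * ‖w‖ ^ 2
    _ = (κ * ‖WithLp.toLp 2 x‖ * ‖w‖) ^ 2 := by
      rw [mul_pow, mul_pow, EuclideanSpace.real_norm_sq_eq]
    _ ≤ ‖∑ i, x i • A i w‖ ^ 2 := by
      rw [← symbol_apply (.toLp 2 x)]
      gcongr
      exact hle _ _

theorem IsCoerciveSymbol.mono {κ' : ℝ} (hA : IsCoerciveSymbol κ A) (hκ : κ' ≤ κ) :
    IsCoerciveSymbol κ' A := fun x w => le_trans (by gcongr) (hA x w)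

variable [CompleteSpace W]

theorem norm_sq_smul_add_smul_apply {S T : W →L[ℝ] W} (hS : IsSelfAdjoint S)
    (hT : IsSelfAdjoint T) (hST : AntiCommute S T) (r s : ℝ) (w : W) :
    ‖(r • S + s • T) w‖ ^ 2 = r ^ 2 * ‖S w‖ ^ 2 + s ^ 2 * ‖T w‖ ^ 2 := by
  have hST' : S * T = -(T * S) := hST
  have sq : star (r • S + s • T) * (r • S + s • T) =
      r ^ 2 • (star S * S) + s ^ 2 • (star T * T) := by
    simp only [star_add, star_smul, hS.star_eq, hT.star_eq, star_trivial, add_mul, mul_add,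
      smul_mul_smul_comm, hST']
    module
  rw [norm_sq_apply_eq_inner_star_mul_self, sq, norm_sq_apply_eq_inner_star_mul_self S,
    norm_sq_apply_eq_inner_star_mul_self T, _root_.add_apply,
    _root_.smul_apply, _root_.smul_apply, inner_add_right,
    real_inner_smul_right, real_inner_smul_right]

theorem IsCoerciveSymbol.cos_smul_add_sin_smul (hA : IsCoerciveSymbol κ A) (hκ : κ ≤ 1)
    (hA' : ∀ i, IsSelfAdjoint (A i)) (hB : IsClifford (fun _ => 1) B)
    (hB' : ∀ i, IsSelfAdjoint (B i)) (hAB : ∀ i j, AntiCommute (A i) (B j)) (θ : ℝ) :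
    IsCoerciveSymbol κ (Real.cos θ • A + Real.sin θ • B) := by
  intro x w
  let S := ∑ i, x i • A i
  let T := ∑ i, x i • B i
  have hS : IsSelfAdjoint S := isSelfAdjoint_sum _ fun i _ => .smul (.all _) (hA' i)
  have hT : IsSelfAdjoint T := isSelfAdjoint_sum _ fun i _ => .smul (.all _) (hB' i)
  have hST : AntiCommute S T := by
    simp only [AntiCommute, S, T, Finset.sum_mul_sum, smul_mul_smul_comm]
    rw [Finset.sum_comm, ← Finset.sum_neg_distrib]
    refine Finset.sum_congr rfl fun i _ => ?_
    rw [← Finset.sum_neg_distrib]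
    refine Finset.sum_congr rfl fun j _ => ?_
    rw [hAB j i, smul_neg, mul_comm]
  have norm_T : ‖T w‖ ^ 2 = (∑ i, x i ^ 2) * ‖w‖ ^ 2 := by
    rw [norm_sq_apply_eq_inner_star_mul_self, hT.star_eq, hB.sum_smul_mul_self]
    simp [inner_smul_right]
  have norm_S : κ * (∑ i, x i ^ 2) * ‖w‖ ^ 2 ≤ ‖S w‖ ^ 2 := by
    simpa [S, _root_.sum_apply] using hA x w
  have split : ∑ i, x i • (Real.cos θ • A + Real.sin θ • B) i w =
      (Real.cos θ • S + Real.sin θ • T) w := by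
    simp only [S, T, Pi.add_apply, Pi.smul_apply, _root_.add_apply, _root_.smul_apply,
      _root_.sum_apply, smul_add, Finset.sum_add_distrib, Finset.smul_sum, smul_comm (x _)]
  rw [split, norm_sq_smul_add_smul_apply hS hT hST, norm_T]
  calc κ * (∑ i, x i ^ 2) * ‖w‖ ^ 2
    _ = Real.cos θ ^ 2 * (κ * (∑ i, x i ^ 2) * ‖w‖ ^ 2)
        + Real.sin θ ^ 2 * (κ * ((∑ i, x i ^ 2) * ‖w‖ ^ 2)) := by
      linear_combination (-(κ * (∑ i, x i ^ 2) * ‖w‖ ^ 2)) * Real.cos_sq_add_sin_sq θ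
    _ ≤ Real.cos θ ^ 2 * ‖S w‖ ^ 2 + Real.sin θ ^ 2 * ((∑ i, x i ^ 2) * ‖w‖ ^ 2) := by
      have norm_T_nonneg : 0 ≤ (∑ i, x i ^ 2) * ‖w‖ ^ 2 := by positivity
      exact add_le_add (by gcongr) (mul_le_mul_of_nonneg_left
        (mul_le_of_le_one_left norm_T_nonneg hκ) (sq_nonneg _))

end Coercivity

section CliffordSymmetry

open Module

variable {ι W : Type*} [NormedAddCommGroup W] [InnerProductSpace ℝ W] [CompleteSpace W]
  {κ κ' : Type*} {R : κ ⊕ κ' → W →L[ℝ] W}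

theorem IsClifford.hasClifford_of_fibre_mem (hR : IsClifford (signature κ κ') R)
    (U : Submodule ℝ (FockSpace ι W)) (hU : ∀ i, ∀ u ∈ U, fibre ι W (R i) u ∈ U) :
    HasClifford (End ℝ U) κ κ' :=
  let onFock : (W →L[ℝ] W) →+* End ℝ (FockSpace ι W) :=
    ContinuousLinearMap.toLinearMapRingHom.comp (RingHomClass.toRingHom (fibre ι W))
  ⟨_, (hR.map onFock).restrict U hU⟩

theorem fibre_mem_supportedOn {s : Set (ι → ℕ)} {u : FockSpace ι W} (hu : u ∈ supportedOn ι W s)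
    (M : W →L[ℝ] W) : fibre ι W M u ∈ supportedOn ι W s := fun k hk => by
  rw [fibre_realizes, coeffwise_apply, hu k hk, map_zero]

variable [Fintype ι] {A B G : ι → W →L[ℝ] W} {d m : ℕ}

theorem fibre_mem_diracCokernel [DecidableEq ι] (h : IsDiracSymbol A G) {M : W →L[ℝ] W} {ε : ℝ}
    (hA : ∀ i, A i * M = ε • (M * A i)) (hG : ∀ i, G i * M = ε • (M * G i)) {u : FockSpace ι W}
    (hu : u ∈ diracCokernel d A G) : fibre ι W M u ∈ diracCokernel d A G := by
  refine ⟨fibre_mem_supportedOn hu.1 M, fun k hk => ?_⟩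
  have hk' : oscillatorDirac A G u k = 0 :=
    (star_normalizedDirac_apply_eq_zero_iff h).1 (hu.2 k hk)
  have coeffs : ⇑(fibre ι W M u) = coeffwise M u := funext (fibre_realizes M u)
  change star (normalizedDirac A G) (fibre ι W M u) k = 0
  rw [star_normalizedDirac_apply_eq_zero_iff h, coeffs, ← End.mul_apply, oscillatorDirac,
    dirac_mul_coeffwise hA hG, LinearMap.smul_apply, End.mul_apply, Pi.smul_apply, coeffwise_apply,
    hk', map_zero, smul_zero]

theorem two_pow_dvd_finrank_groundSpace [FiniteDimensional ℝ W] (hA : IsDiracSymbol A G)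
    (hB : IsDiracSymbol B G) (hB' : IsClifford (fun _ => 1) B)
    (hAB : ∀ i j, AntiCommute (A i) (B j))
    (hinj : ∀ (x : ι → ℝ) w, ∑ i, x i • A i w = 0 → x = 0 ∨ w = 0)
    {R : Fin (m + 1) ⊕ Fin 1 → W →L[ℝ] W} (hR : IsClifford (signature (Fin (m + 1)) (Fin 1)) R)
    {ε : Fin (m + 1) ⊕ Fin 1 → ℝ} (hRA : ∀ i j, A j * R i = ε i • (R i * A j))
    (hRG : ∀ i j, G j * R i = ε i • (R i * G j)) :
    2 ^ (cliffordExponent m + 1) ∣ finrank ℝ (groundSpace B G) := by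
  classical
  obtain ⟨κ, hκ, hcoercive⟩ := exists_isCoerciveSymbol hinj
  have hpath := (hcoercive.mono (min_le_left κ 1)).cos_smul_add_sin_smul (min_le_right κ 1)
    hA.isSelfAdjoint hB' hB.isSelfAdjoint hAB
  obtain ⟨d, hd⟩ := exists_nat_ge ((2 * ∑ i, ‖G i‖ * (‖A i‖ + ‖B i‖)) / min κ 1)
  have hκ₀ : 0 < min κ 1 := lt_min hκ one_pos
  have homotopy : finrank ℝ (diracCokernel d A G) = finrank ℝ (diracCokernel d B G) :=
    finrank_diracCokernel_eq hA hB hκ₀ (min_le_right κ 1) hpath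
      ((div_le_iff₀' hκ₀).1 (hd.trans (by simp)))
  have dvd_cokernel : 2 ^ (cliffordExponent m + 1) ∣ finrank ℝ (diracCokernel d A G) :=
    two_pow_dvd_finrank_of_hasClifford (hR.hasClifford_of_fibre_mem _ fun i _ hu =>
      fibre_mem_diracCokernel hA (hRA i) (hRG i) hu)
  have dvd_supportedOn :
      2 ^ (cliffordExponent m + 1) ∣ finrank ℝ (supportedOn ι W (evenIndicesUpTo ι d)) :=
    two_pow_dvd_finrank_of_hasClifford (hR.hasClifford_of_fibre_mem _ fun i _ hu =>
      fibre_mem_supportedOn hu (R i))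
  rwa [finrank_supportedOn_eq_add hB hB' d, ← homotopy, Nat.dvd_add_right dvd_cokernel]
    at dvd_supportedOn

end CliffordSymmetry

section CliffordTwist

variable {R ι : Type*} [Ring R] {s : ι → ℤ} {e : ι → R}

theorem IsClifford.mul_right_of_antiCommute (he : IsClifford s e) {a : R} (ha : a * a = 1)
    (hea : ∀ i, AntiCommute (e i) a) : IsClifford (fun i => -s i) fun i => e i * a := by
  have mul_mul (i j) : e i * a * (e j * a) = -(e i * e j) := by
    rw [(hea j).mul_mul_mul_comm, ha, mul_one]
  refine ⟨fun i => ?_, fun i j hij => ?_⟩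
  · rw [mul_mul, he.mul_self, Int.cast_neg]
  · exact (mul_mul i j).trans (by rw [he.antiCommute hij, mul_mul])

theorem IsStarClifford.mul_right_of_commute [StarRing R] (he : IsStarClifford s e) {J : R}
    (hJ : J * J = -1) (star_J : star J = -J) (heJ : ∀ i, Commute (e i) J) :
    IsStarClifford (fun i => -s i) fun i => e i * J := by
  have mul_mul (i j) : e i * J * (e j * J) = -(e i * e j) := by
    rw [(heJ j).symm.mul_mul_mul_comm, hJ, mul_neg, mul_one]
  refine ⟨⟨fun i => ?_, fun i j hij => ?_⟩, fun i => ?_⟩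
  · rw [mul_mul, he.mul_self, Int.cast_neg]
  · exact (mul_mul i j).trans (by rw [he.antiCommute hij, mul_mul])
  · rw [star_mul, star_J, he.star_eq, neg_mul, ← mul_assoc, ← (Int.cast_commute _ J).eq, mul_assoc,
      ← (heJ i).eq, Int.cast_neg, neg_mul]

end CliffordTwist

section DiracSymmetry

variable {R : Type*} [Ring R] {m : ℕ} {e : Fin (m + 2) ⊕ Fin (m + 1) → R} {J : R}

/-- The symmetries of the Dirac operators with Clifford matrices `e (.inl i.castSucc) * J` whose
potential commutes with `e` and anticommutes with `J`: the last one anticommutes with such an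
operator, the others commute with it. -/
def diracSymmetry (e : Fin (m + 2) ⊕ Fin (m + 1) → R) (J : R) : Fin (m + 1) ⊕ Fin 1 → R :=
  Sum.elim (fun i => e (.inr i) * e (.inl (Fin.last _))) fun _ => e (.inl (Fin.last _)) * J

theorem isClifford_diracSymmetry (he : IsClifford (signature (Fin (m + 2)) (Fin (m + 1))) e)
    (hJ : J * J = -1) (heJ : ∀ i, Commute (e i) J) :
    IsClifford (signature (Fin (m + 1)) (Fin 1)) (diracSymmetry e J) := by
  let α := e (.inl (Fin.last _))
  have hα : α * α = 1 := by simpa [signature] using he.mul_self (.inl (Fin.last _))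
  have anti (i) : AntiCommute (e (.inr i)) α := he.antiCommute Sum.inr_ne_inl
  have positive := (he.comp Sum.inr_injective).mul_right_of_antiCommute hα anti
  have anti_last (i) : AntiCommute (e (.inr i) * α) (α * J) :=
    (((anti i).symm.mul_right_of_commute (.refl α)).symm).mul_right_of_commute
      ((heJ _).mul_left (heJ _))
  have last_mul_self : α * J * (α * J) = -1 := by
    rw [(heJ _).symm.mul_mul_mul_comm, hα, hJ, one_mul]
  constructor
  · rintro (i | i)
    · simpa [diracSymmetry, signature] using positive.mul_self i
    · simpa [diracSymmetry, signature] using last_mul_self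
  · rintro (i | i) (j | j) hij
    · exact positive.antiCommute fun h => hij (congrArg _ h)
    · exact anti_last i
    · exact (anti_last j).symm
    · exact absurd (congrArg _ (Subsingleton.elim i j)) hij

theorem mul_diracSymmetry [Algebra ℝ R] {a : R}
    (hcomm : ∀ i, Commute a (e (.inr i) * e (.inl (Fin.last _))))
    (hanti : AntiCommute a (e (.inl (Fin.last _)) * J)) (i : Fin (m + 1) ⊕ Fin 1) :
    a * diracSymmetry e J i =
      (signature (Fin (m + 1)) (Fin 1) i : ℝ) • (diracSymmetry e J i * a) := by
  rcases i with i | i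
  · simpa [diracSymmetry, signature] using (hcomm i).eq
  · simpa [diracSymmetry, signature, AntiCommute] using hanti

end DiracSymmetry

open Module in
theorem two_pow_mul_two_pow_dvd_finrank {W : Type*} [NormedAddCommGroup W]
    [InnerProductSpace ℝ W] [FiniteDimensional ℝ W] {m : ℕ}
    {e : Fin (m + 2) ⊕ Fin (m + 1) → W →L[ℝ] W} {J : W →L[ℝ] W} {F : Fin (m + 1) → W →L[ℝ] W}
    (he : IsStarClifford (signature (Fin (m + 2)) (Fin (m + 1))) e)
    (hJ : J * J = -1) (star_J : star J = -J) (heJ : ∀ i, Commute (e i) J)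
    (hF : ∀ i, IsSelfAdjoint (F i)) (hFJ : ∀ i, AntiCommute (F i) J)
    (heF : ∀ i j, Commute (e i) (F j))
    (hinj : ∀ (x : Fin (m + 1) → ℝ) w, ∑ i, x i • F i w = 0 → x = 0 ∨ w = 0) :
    2 ^ (m + 1) * 2 ^ (cliffordExponent m + 1) ∣ finrank ℝ W := by
  have twisted := he.mul_right_of_commute hJ star_J heJ
  let B (i : Fin (m + 1)) := e (.inr i) * J
  let G (i : Fin (m + 1)) := e (.inl i.castSucc) * J
  have hB : IsStarClifford (fun _ => 1) B := by
    simpa only [signature, Function.comp_def, Sum.elim_inr, neg_neg] using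
      twisted.comp Sum.inr_injective
  have hG : IsStarClifford (fun _ => -1) G :=
    twisted.comp (Sum.inl_injective.comp (Fin.castSucc_injective _))
  have anti_F (i j) : AntiCommute (F j) (e i * J) :=
    (hFJ j).mul_right_of_commute_left (heF i j).symm
  have symbol_F : IsDiracSymbol F G := ⟨hF, hG, fun i j => (anti_F _ j).symm⟩
  have symbol_B : IsDiracSymbol B G :=
    ⟨fun i => (hB.star_eq i).trans (by simp), hG, fun i j => twisted.antiCommute Sum.inl_ne_inr⟩
  have comm_G (j i) : Commute (G j) (e (.inr i) * e (.inl (Fin.last _))) :=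
    ((he.antiCommute Sum.inl_ne_inr).mul_right
      (he.antiCommute (Sum.inl_injective.ne (Fin.castSucc_ne_last j)))).mul_left
      ((heJ _).mul_left (heJ _)).symm
  rw [finrank_eq_two_pow_mul_finrank_groundSpace symbol_B hB.toIsClifford, Fintype.card_fin]
  exact mul_dvd_mul_left _ (two_pow_dvd_finrank_groundSpace symbol_F symbol_B hB.toIsClifford
    (fun i j => anti_F _ i) hinj (isClifford_diracSymmetry he.toIsClifford hJ heJ)
    (fun i j => mul_diracSymmetry (fun _ => ((heF _ j).mul_left (heF _ j)).symm) (anti_F _ j) i)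
    (fun i j => mul_diracSymmetry (comm_G j)
      (twisted.antiCommute (Sum.inl_injective.ne (Fin.castSucc_ne_last j))) i))

open scoped TensorProduct in
theorem two_pow_dvd_card_of_isUnit_sum_smul {L : Type*} [Fintype L] [DecidableEq L] {m : ℕ}
    {J : Matrix L L ℝ} (hJ : J * J = -1) (transpose_J : Jᵀ = -J) {F : Fin (m + 1) → Matrix L L ℝ}
    (hF : ∀ i, (F i)ᵀ = F i) (hFJ : ∀ i, AntiCommute (F i) J)
    (hunit : ∀ x : Fin (m + 1) → ℝ, x ≠ 0 → IsUnit (∑ i, x i • F i)) :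
    2 ^ (cliffordExponent m + 1) ∣ Fintype.card L := by
  obtain ⟨e, he⟩ := hasMatrixClifford_succ_self (m + 1)
  let K := Fin (2 ^ (m + 1))
  let Φ : (Matrix K K ℝ ⊗[ℝ] Matrix L L ℝ) ≃⋆ₐ[ℝ]
      (EuclideanSpace ℝ (K × L) →L[ℝ] EuclideanSpace ℝ (K × L)) :=
    (kroneckerStarAlgEquiv K L ℝ).trans toEuclideanCLM
  let left : Matrix K K ℝ →ₐ[ℝ] _ := Φ.toAlgEquiv.toAlgHom.comp Algebra.TensorProduct.includeLeft
  let right : Matrix L L ℝ →ₐ[ℝ] _ := Φ.toAlgEquiv.toAlgHom.comp Algebra.TensorProduct.includeRight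
  have commute (a b) : Commute (left a) (right b) :=
    Commute.map (by simp [Commute, SemiconjBy]) Φ
  have star_left (a) : left (star a) = star (left a) := by
    simp [left, ← map_star]
  have star_right (b) : right bᵀ = star (right b) := by
    simp [right, ← map_star, star_eq_conjTranspose]
  have injective (x : Fin (m + 1) → ℝ) (w) (h : ∑ i, x i • right (F i) w = 0) : x = 0 ∨ w = 0 := by
    refine or_iff_not_imp_left.2 fun hx => ?_
    have apply_eq_zero : right (∑ i, x i • F i) w = 0 := by simpa [_root_.sum_apply] using h
    obtain ⟨b, hb⟩ := (hunit x hx).exists_left_inv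
    have := congrArg (right b) apply_eq_zero
    rwa [← mul_apply_eq_comp, ← map_mul, hb, map_one, map_zero] at this
  have key := two_pow_mul_two_pow_dvd_finrank (he.map left.toRingHom star_left) (J := right J)
    (by rw [← map_mul, hJ, map_neg, map_one]) (by rw [← star_right, transpose_J, map_neg])
    (fun i => commute (e i) J) (F := fun i => right (F i))
    (fun i => (star_right _).symm.trans (congrArg _ (hF i))) (fun i => (hFJ i).map right)
    (fun i j => commute (e i) (F j)) injective
  rw [finrank_euclideanSpace, Fintype.card_prod, Fintype.card_fin] at key
  exact Nat.dvd_of_mul_dvd_mul_left (by positivity) key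

theorem Jreal_mul_self (N : ℕ) : Jreal N * Jreal N = -1 := by
  rw [Jreal, fromBlocks_multiply, ← fromBlocks_one, fromBlocks_neg]
  simp

theorem transpose_Jreal (N : ℕ) : (Jreal N)ᵀ = -Jreal N := by
  rw [Jreal, fromBlocks_transpose, fromBlocks_neg]
  simp

theorem natCast_le_hrRho_of_isUnit {N n : ℕ} (hN : N ≠ 0)
    (f : EuclideanSpace ℝ (Fin n) →ₗ[ℝ] Matrix (Fin N ⊕ Fin N) (Fin N ⊕ Fin N) ℝ)
    (hf : ∀ v, (f v)ᵀ = f v ∧ (f v)ᵀ * Jreal N + Jreal N * f v = 0)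
    (hunit : ∀ v, v ≠ 0 → IsUnit (f v)) : (n : ℤ) ≤ hrRho ((N : ℚ) / 2) + 2 := by
  rcases n with _ | m
  · have := (two_pow_cliffordExponent_dvd_iff hN 0).1 (by simp [cliffordExponent])
    lia
  rw [← two_pow_cliffordExponent_dvd_iff hN]
  have sum_smul (x : Fin (m + 1) → ℝ) :
      ∑ i, x i • f (EuclideanSpace.single i 1) = f (WithLp.toLp 2 x) := by
    simp only [← map_smul, ← map_sum]
    congr 1
    ext j
    simp [Pi.single_apply]
  have dvd_card := two_pow_dvd_card_of_isUnit_sum_smul (Jreal_mul_self N) (transpose_Jreal N)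
    (F := fun i => f (EuclideanSpace.single i 1)) (fun i => (hf _).1)
    (fun i => eq_neg_of_add_eq_zero_left (by simpa only [(hf _).1] using (hf _).2))
    fun x hx => sum_smul x ▸ hunit _ ((WithLp.toLp_eq_zero 2).not.2 hx)
  rw [Fintype.card_sum, Fintype.card_fin, ← two_mul, pow_succ'] at dvd_card
  exact Nat.dvd_of_mul_dvd_mul_left two_pos dvd_card

theorem isUnit_of_sq_eq_smul_one {R : Type*} [Ring R] [Algebra ℝ R] {a : R} {r : ℝ}
    (hr : r ≠ 0) (ha : a ^ 2 = r • (1 : R)) : IsUnit a := by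
  rw [← isUnit_pow_iff two_ne_zero, ha, ← Algebra.algebraMap_eq_smul_one]
  exact (IsUnit.mk0 r hr).map _

/-- Entry `𝔤 = 𝔰𝔭(N,ℝ)` of the Hurwitz–Radon value theorem
(the `𝔭`-part being the symmetric elements of `𝔰𝔭(N,ℝ)`):
`ρ⁽¹⁾ = ρ⁽²⁾ = ρ(N/2) + 2`. -/
theorem hurwitzRadon_sp_N_R (N : ℕ) (hN : 1 ≤ N) (n : ℕ) :
    ((∃ f : EuclideanSpace ℝ (Fin n) →ₗ[ℝ]
          Matrix (Fin N ⊕ Fin N) (Fin N ⊕ Fin N) ℝ,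
        ∀ v, (f v)ᵀ = f v ∧ (f v)ᵀ * Jreal N + Jreal N * f v = 0 ∧
          (f v) ^ 2 = (‖v‖ ^ 2 : ℝ) • (1 : Matrix (Fin N ⊕ Fin N) (Fin N ⊕ Fin N) ℝ)) ↔
      (∃ f : EuclideanSpace ℝ (Fin n) →ₗ[ℝ]
          Matrix (Fin N ⊕ Fin N) (Fin N ⊕ Fin N) ℝ,
        (∀ v, (f v)ᵀ = f v ∧ (f v)ᵀ * Jreal N + Jreal N * f v = 0) ∧
          ∀ v, v ≠ 0 → IsUnit (f v))) ∧
    ((∃ f : EuclideanSpace ℝ (Fin n) →ₗ[ℝ]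
          Matrix (Fin N ⊕ Fin N) (Fin N ⊕ Fin N) ℝ,
        (∀ v, (f v)ᵀ = f v ∧ (f v)ᵀ * Jreal N + Jreal N * f v = 0) ∧
          ∀ v, v ≠ 0 → IsUnit (f v)) ↔
      (n : ℤ) ≤ hrRho ((N : ℚ) / 2) + 2) := by
  have hN₀ : N ≠ 0 := Nat.one_le_iff_ne_zero.1 hN
  have cycle {p q r : Prop} (hpq : p → q) (hqr : q → r) (hrp : r → p) : (p ↔ q) ∧ (q ↔ r) :=
    ⟨⟨hpq, hrp ∘ hqr⟩, ⟨hqr, hpq ∘ hrp⟩⟩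
  refine cycle ?_ ?_ (exists_linearMap_sq_eq_norm_sq hN₀)
  · rintro ⟨f, hf⟩
    exact ⟨f, fun v => ⟨(hf v).1, (hf v).2.1⟩, fun v hv =>
      isUnit_of_sq_eq_smul_one (pow_ne_zero 2 (norm_ne_zero_iff.2 hv)) (hf v).2.2⟩
  · rintro ⟨f, hf, hunit⟩
    exact natCast_le_hrRho_of_isUnit hN₀ f hf hunit
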